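/- arXiv:2102.09143 — 2 statements merged into one kernel-verified Lean document; each statement's English description precedes it below -/
import Mathlib

section
/- Consider the zig-zag triangulation of an n-gon whose triangles are θ_i = (i, i+1, i+2) for 1 ≤ i ≤ n−2, with internal diagonals (i, i+1) for 3 ≤ i+1 ≤ n−1, equipped with the default orientation in which every vertex 2, …, n−1 is a fan center and the diagonals are oriented 2 → 3 → ⋯ → n−1. Define, by downward recursion on k starting from the given λ_{n−2,n} and [n−2,n−1,n] = θ_{n−2}, the λ-lengths λ_{k,n} and μ-invariants [k,k+1,n] via the super Ptolemy flip of the arc (k+1,k+2): λ_{k+1,k+2}·λ_{k,n} = λ_{k,k+2}λ_{k+1,n} + λ_{k,k+1}λ_{k+2,n} + √(λ_{k,k+2}λ_{k+1,n}λ_{k,k+1}λ_{k+2,n})·(product of [k+1,k+2,n] and θ_k, in the order dictated by the orientation) and [k,k+1,n]·√(λ_{k,n}λ_{k+1,k+2}) = θ_k·√(λ_{k,k+2}λ_{k+1,n}) + [k+1,k+2,n]·√(λ_{k,k+1}λ_{k+2,n}). Then for every k: √(λ_{k,n}·λ_{k+1,n}/λ_{k,k+1})·[k,k+1,n] = Σ_{i=k}^{n−2}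 Σ_{t ∈ 𝒯_{n,i+1}} wt(t)·wt(σ_i), where 𝒯_{n,i+1} is the set of super T-paths from n to i+1 in the zig-zag triangulation and wt(σ_i) = √(λ_{i,i+2}/(λ_{i,i+1}λ_{i+1,i+2}))·θ_i. -/
namespace ZigZag

/-!  Combinatorics of the zig-zag triangulation of an `n`-gon.

The vertices are labelled `1, …, n`; in convex position their cyclic
(counterclockwise) order is `1, 2, 4, 6, …, n, n-1, …, 5, 3`.  The triangles are
`θ_i = (i, i+1, i+2)` for `1 ≤ i ≤ n-2`; the internal diagonals are `(j, j+1)`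
for `2 ≤ j ≤ n-2` and the other pairs `(j, j+1)`, `(j, j+2)` are boundary edges.
The default orientation orients the diagonals `2 → 3 → ⋯ → n-1`. -/

/-- The position of the labelled vertex `v` in the convex (counterclockwise)
cyclic order `1, 2, 4, 6, …, n, n-1, …, 5, 3` of the `n`-gon. -/
def pos (n v : ℕ) : ℕ :=
  if v = 1 then 0 else if v % 2 = 0 then v / 2 else n - (v - 1) / 2

/-- For an oriented chord of the convex polygon going from position `u` to
position `v`, the position `w` lies (strictly) on its left side. -/
def inLeft (u v w : ℕ) : Bool :=
  if u < v then decide (u < w ∧ w < v) else decide (w < v ∨ u < w)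

/-- The triangle `θ_k = (k, k+1, k+2)` lies to the right of the diagonal
`(k+1, k+2)` equipped with its default orientation `k+1 → k+2`. -/
def thetaRight (n k : ℕ) : Bool :=
  ! inLeft (pos n (k + 1)) (pos n (k + 2)) (pos n k)

/-- The positive ordering on the triangles `θ_i` of the zig-zag triangulation
(with the default orientation), as a `Bool`-valued "comes before" relation: for
`i < j`, `θ_i` comes first iff `θ_i` is to the right of the oriented diagonal
separating `θ_i` from `θ_{i+1}`. -/
def posBefore (n i j : ℕ) : Bool :=
  if i < j then thetaRight n i else if j < i then ! thetaRight n j else true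

/-- Insertion into a sorted list (used to reorder the odd factors of a weight
into the positive ordering). -/
def insB {α : Type*} (le : α → α → Bool) (x : α) : List α → List α
  | [] => [x]
  | y :: t => if le x y then x :: y :: t else y :: insB le x t

/-- Insertion sort along a `Bool`-valued "comes before" relation. -/
def sortB {α : Type*} (le : α → α → Bool) : List α → List α
  | [] => []
  | x :: t => insB le x (sortB le t)

/-- Edges of the zig-zag triangulation (including boundary edges): the pairs
`{u, u+1}` and `{u, u+2}` with all labels in `{1, …, n}`. -/
def ZEdge (n u v : ℕ) : Prop :=
  1 ≤ u ∧ u ≤ n ∧ 1 ≤ v ∧ v ≤ n ∧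
    (v = u + 1 ∨ u = v + 1 ∨ v = u + 2 ∨ u = v + 2)

/-- Vertices of the auxiliary graph for the arc `(j₀, n)`: `Sum.inl u` is the
polygon vertex labelled `u`, and `Sum.inr i` is the internal vertex `θ_i` placed
in the face `(i, i+1, i+2)` (for `j₀ ≤ i ≤ n-2`, the faces crossed by the
arc). -/
abbrev V := ℕ ⊕ ℕ

/-- Adjacency in the auxiliary graph of the zig-zag triangulation for the arc
`(j₀, n)`: edges of the triangulation, `σ`-edges `σ_i = (θ_i, i+1)` joining each
internal vertex to its fan center `i+1`, and `τ`-edges `τ_{ij} = (θ_i, θ_j)`. -/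
def ZJoins (n j0 : ℕ) : V → V → Prop
  | Sum.inl u, Sum.inl v => ZEdge n u v
  | Sum.inl u, Sum.inr i => u = i + 1 ∧ j0 ≤ i ∧ i + 2 ≤ n
  | Sum.inr i, Sum.inl u => u = i + 1 ∧ j0 ≤ i ∧ i + 2 ≤ n
  | Sum.inr i, Sum.inr i' => i ≠ i' ∧ j0 ≤ i ∧ i + 2 ≤ n ∧ j0 ≤ i' ∧ i' + 2 ≤ n

/-- `ZCrossPos n j0 e m` : the auxiliary edge with endpoint pair `e` crosses the
arc `(j₀, n)`, the crossing occurring at linear position `m` along the arc: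
diagonals `(w, w+1)` with `j₀+1 ≤ w ≤ n-2` at position `2w`, and `σ`-edges
`σ_i` at position `2i+1`; `τ`-edges and boundary edges do not cross. -/
def ZCrossPos (n j0 : ℕ) : V × V → ℕ → Prop
  | (Sum.inl u, Sum.inl v), m =>
      ∃ w, ((u = w ∧ v = w + 1) ∨ (v = w ∧ u = w + 1)) ∧
        j0 + 1 ≤ w ∧ w + 2 ≤ n ∧ m = 2 * w
  | (Sum.inl _, Sum.inr i), m => m = 2 * i + 1
  | (Sum.inr i, Sum.inl _), m => m = 2 * i + 1
  | (Sum.inr _, Sum.inr _), _ => False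

/-- The endpoint pair is a `σ`-edge. -/
def isSig : V × V → Prop
  | (Sum.inl _, Sum.inr _) => True
  | (Sum.inr _, Sum.inl _) => True
  | _ => False

/-- The endpoint pair is a `τ`-edge. -/
def isTau : V × V → Prop
  | (Sum.inr _, Sum.inr _) => True
  | _ => False

/-- Equality of auxiliary edges, as unordered pairs of endpoints. -/
def pairEqV (p q : V × V) : Prop :=
  (p.1 = q.1 ∧ p.2 = q.2) ∨ (p.1 = q.2 ∧ p.2 = q.1)

/-- A super `T`-path in the zig-zag triangulation of the `n`-gon, along the arc
`(j₀, n)`; if `rev = false` it goes from `j₀` to `n`, and if `rev = true` from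
`n` to `j₀` (so that the crossing positions must decrease).  The axioms are
(T1)–(T7) of Definition 5.3 of the paper:  a sequence of vertices of the
auxiliary graph joined by pairwise distinct edges, of odd length, with
even-numbered edges crossing the arc (`σ`-edges counting as crossing),
`σ`-edges only at even and `τ`-edges only at odd positions, and crossings
occurring in order from the starting vertex. -/
structure SuperTPath (n j0 : ℕ) (rev : Bool) where
  len : ℕ
  vert : Fin (len + 1) → V
  odd_len : Odd len
  first_eq : vert 0 = Sum.inl (if rev then n else j0)
  last_eq : vert (Fin.last len) = Sum.inl (if rev then j0 else n)
  joins : ∀ i : Fin len, ZJoins n j0 (vert i.castSucc) (vert i.succ)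
  edges_distinct : ∀ i i' : Fin len, i ≠ i' →
    ¬ pairEqV (vert i.castSucc, vert i.succ) (vert i'.castSucc, vert i'.succ)
  even_cross : ∀ i : Fin len, Odd i.val →
    ∃ m, ZCrossPos n j0 (vert i.castSucc, vert i.succ) m
  sig_even : ∀ i : Fin len, isSig (vert i.castSucc, vert i.succ) → Odd i.val
  tau_odd : ∀ i : Fin len, isTau (vert i.castSucc, vert i.succ) → Even i.val
  cross_mono : ∀ i i' : Fin len, i < i' → ∀ m m',
    ZCrossPos n j0 (vert i.castSucc, vert i.succ) m →
    ZCrossPos n j0 (vert i'.castSucc, vert i'.succ) m' →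
    (if rev then m' < m else m < m')

variable {A : Type*} [Ring A]

/-- `λ`-length of an edge, with the endpoints sorted. -/
def lamE (lam : ℕ → ℕ → A) (u v : ℕ) : A := lam (min u v) (max u v)

/-- The even (scalar) part of the weight of the `k`-th step of a super `T`-path
(steps numbered from `0`; the step is an odd step of the path iff `k` is even):
an edge of the triangulation contributes its `λ`-length at odd steps and the
inverse of its `λ`-length at even steps, a `σ`-edge `σ_i` contributes
`√(λ_{i,i+2}/(λ_{i,i+1}λ_{i+1,i+2}))`, and a `τ`-edge contributes `1`. -/
noncomputable def stepWt (lam : ℕ → ℕ → A) (sqrt : A → A) (k : ℕ) : V × V → A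
  | (Sum.inl u, Sum.inl v) =>
      if k % 2 = 0 then lamE lam u v else Ring.inverse (lamE lam u v)
  | (Sum.inl _, Sum.inr i) =>
      sqrt (lamE lam i (i + 2) *
        Ring.inverse (lamE lam i (i + 1) * lamE lam (i + 1) (i + 2)))
  | (Sum.inr i, Sum.inl _) =>
      sqrt (lamE lam i (i + 2) *
        Ring.inverse (lamE lam i (i + 1) * lamE lam (i + 1) (i + 2)))
  | (Sum.inr _, Sum.inr _) => 1

/-- The index of the face whose `σ`-edge is used at a given step, if any. -/
def sigIdx : V × V → Option ℕ
  | (Sum.inl _, Sum.inr i) => some i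
  | (Sum.inr i, Sum.inl _) => some i
  | _ => none

/-- The weight of a super `T`-path: the ordered product of the even parts of the
step weights, times the product of the odd `μ`-invariants `θ_i` of the faces
whose `σ`-edges are used, taken in the positive ordering. -/
noncomputable def wt (n : ℕ) (lam : ℕ → ℕ → A) (θ : ℕ → A) (sqrt : A → A)
    {j0 : ℕ} {rev : Bool} (t : SuperTPath n j0 rev) : A :=
  ((List.finRange t.len).map
      (fun i => stepWt lam sqrt i.val (t.vert i.castSucc, t.vert i.succ))).prod *
  ((sortB (posBefore n)
      ((List.finRange t.len).filterMap
        (fun i => sigIdx (t.vert i.castSucc, t.vert i.succ)))).map θ).prod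

/-- The weight of the `σ`-edge `σ_i` (including its odd factor `θ_i`). -/
noncomputable def sigWt (lam : ℕ → ℕ → A) (θ : ℕ → A) (sqrt : A → A) (i : ℕ) : A :=
  sqrt (lamE lam i (i + 2) *
    Ring.inverse (lamE lam i (i + 1) * lamE lam (i + 1) (i + 2))) * θ i

/-!
List a super `T`-path from `n` to `k` backwards, from `k` up to `n`.  Give the polygon vertex `u`
the level `2u` and the internal vertex `θ_i` the level `2i + 1`; a crossing edge crosses the arc at
the smaller level of its endpoints, so that the crossing positions increase along the list.  This
forces every list to arise from a shorter one in exactly one of three ways: prepend `k, k+2` to a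
list from `k+1`, cancelling a backtrack; prepend `k, k+1` to a list from `k+2`; or prepend
`k, k+1, θ_k, θ_i` to a list from `i+1`, with `i > k`.  Accordingly the total weight `W_k` satisfies

`W_k = W_{k+1} λ_{k,k+2}/λ_{k+1,k+2} + W_{k+2} λ_{k,k+1}/λ_{k+1,k+2}
        + λ_{k,k+1} √(λ_{k,k+2}/(λ_{k,k+1}λ_{k+1,k+2})) (θ_k · ∑_{i>k} W_{i+1} wt(σ_i))`

with the odd product in the positive order.  Multiplied by `√(λ_{k+1,n}/(λ_{k,k+1}λ_{k+1,k+2}))`,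
the recursion for `[k,k+1,n]` telescopes to the asserted sum with `λ_{i+1,n}` in place of
`W_{i+1}`; inserted into the recursion for `λ_{k,n}`, this sum turns it into the recursion for
`W_k`.  Hence `W_k = λ_{k,n}`.
-/

section Admissible

variable {n j0 : ℕ} {a b c x y : V} {l : List V}

/-- The steps of a path whose vertices are listed backwards, from its end to its start: for each
step, its index counted from the start of the path, together with its endpoints. -/
def backSteps : List V → List (ℕ × V × V)
  | a :: b :: l => (l.length, b, a) :: backSteps (b :: l)
  | _ => []

/-- The conditions on a super `T`-path that concern only its `i`-th step `e`. -/
structure IsStep (n j0 i : ℕ) (e : V × V) : Prop where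
  joins : ZJoins n j0 e.1 e.2
  cross : Odd i → ∃ m, ZCrossPos n j0 e m
  sig : isSig e → Odd i
  tau : isTau e → Even i

/-- The conditions on a super `T`-path towards `j0` that concern two of its steps, of which `e'`
is the earlier one. -/
def CrossesBefore (n j0 : ℕ) (e e' : V × V) : Prop :=
  ¬ pairEqV e' e ∧ ∀ m m', ZCrossPos n j0 e m → ZCrossPos n j0 e' m' → m < m'

/-- The list of vertices `l`, read backwards, satisfies those axioms of a super `T`-path from `n`
to `j0` that do not concern the endpoints and the length. -/
def IsAdmissible (n j0 : ℕ) (l : List V) : Prop :=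
  (∀ s ∈ backSteps l, IsStep n j0 s.1 s.2) ∧
    (backSteps l).Pairwise fun s s' => CrossesBefore n j0 s.2 s'.2

/-- Twice the position of a vertex along the arc, where `θ_i` lies halfway between `i` and
`i + 1`. -/
def level : V → ℕ
  | Sum.inl u => 2 * u
  | Sum.inr i => 2 * i + 1

theorem ZCrossPos.eq_min_level {e : V × V} {m : ℕ} (h : ZCrossPos n j0 e m)
    (he : ZJoins n j0 e.1 e.2) : m = min (level e.1) (level e.2) := by
  obtain ⟨u | i, v | j⟩ := e <;> simp only [ZCrossPos, ZJoins, level] at * <;> grind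

theorem isAdmissible_cons_cons :
    IsAdmissible n j0 (a :: b :: l) ↔ IsStep n j0 l.length (b, a) ∧
      (∀ s ∈ backSteps (b :: l), CrossesBefore n j0 (b, a) s.2) ∧ IsAdmissible n j0 (b :: l) := by
  simp only [IsAdmissible, backSteps, List.forall_mem_cons, List.pairwise_cons]
  tauto

theorem isAdmissible_singleton : IsAdmissible n j0 [a] := by
  simp [IsAdmissible, backSteps]

theorem mem_of_mem_backSteps {s : ℕ × V × V} (h : s ∈ backSteps l) : s.2.1 ∈ l ∧ s.2.2 ∈ l := by
  fun_induction backSteps l <;> grind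

theorem lt_of_forall_lt_level {s : ℕ × V × V} {d m : ℕ} (hl : ∀ x ∈ l, d < level x)
    (hs : s ∈ backSteps l) (hj : ZJoins n j0 s.2.1 s.2.2) (hm : ZCrossPos n j0 s.2 m) : d < m := by
  rw [hm.eq_min_level hj]
  exact lt_min (hl _ (mem_of_mem_backSteps hs).1) (hl _ (mem_of_mem_backSteps hs).2)

theorem not_pairEqV_of_notMem {s : ℕ × V × V} {e : V × V} (he : e.1 ∉ l ∨ e.2 ∉ l)
    (hs : s ∈ backSteps l) : ¬ pairEqV s.2 e := by
  have := mem_of_mem_backSteps hs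
  grind [pairEqV]

theorem IsAdmissible.cons_of_forall_level_lt (h : IsAdmissible n j0 (b :: l))
    (hs : IsStep n j0 l.length (b, a)) (hlt : ∀ x ∈ b :: l, level a < level x) :
    IsAdmissible n j0 (a :: b :: l) := by
  refine isAdmissible_cons_cons.2 ⟨hs, fun s hmem => ⟨?_, fun m m' hm hm' => ?_⟩, h⟩
  · exact not_pairEqV_of_notMem (.inr fun ha => (hlt a ha).false) hmem
  · have ha : m ≤ level a := hm.eq_min_level hs.joins ▸ min_le_right _ _
    exact ha.trans_lt (lt_of_forall_lt_level hlt hmem (h.1 s hmem).joins hm')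

theorem IsAdmissible.cons_of_not_cross (h : IsAdmissible n j0 (b :: c :: l))
    (hs : IsStep n j0 (l.length + 1) (b, a)) (hlt : ∀ x ∈ c :: l, level b < level x)
    (hac : a ≠ c) (hcb : ∀ m, ¬ ZCrossPos n j0 (c, b) m) :
    IsAdmissible n j0 (a :: b :: c :: l) := by
  refine isAdmissible_cons_cons.2 ⟨hs, ?_, h⟩
  have hb : b ∉ c :: l := fun hb => (hlt b hb).false
  rw [backSteps, List.forall_mem_cons]
  refine ⟨⟨by grind [pairEqV], fun m m' _ hm' => absurd hm' (hcb m')⟩,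
    fun s hmem => ⟨not_pairEqV_of_notMem (.inl hb) hmem, fun m m' hm hm' => ?_⟩⟩
  have hmb : m ≤ level b := hm.eq_min_level hs.joins ▸ min_le_left _ _
  exact hmb.trans_lt (lt_of_forall_lt_level hlt hmem
    ((isAdmissible_cons_cons.1 h).2.2.1 s hmem).joins hm')

theorem IsAdmissible.ne_of_cons_cons (h : IsAdmissible n j0 (a :: b :: c :: l)) : a ≠ c := by
  rintro rfl
  exact ((isAdmissible_cons_cons.1 h).2.1 _ (List.mem_cons_self ..)).1 (.inr ⟨rfl, rfl⟩)

theorem isStep_inl_inl {i u v : ℕ} (h : ZEdge n u v)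
    (hi : Odd i → ∃ m, ZCrossPos n j0 (Sum.inl u, Sum.inl v) m) :
    IsStep n j0 i (Sum.inl u, Sum.inl v) :=
  ⟨h, hi, False.elim, False.elim⟩

theorem isStep_inl_inr {i j : ℕ} (hj : j0 ≤ j) (hjn : j + 2 ≤ n) (hi : Odd i) :
    IsStep n j0 i (Sum.inl (j + 1), Sum.inr j) :=
  ⟨⟨rfl, hj, hjn⟩, fun _ => ⟨_, rfl⟩, fun _ => hi, False.elim⟩

theorem isStep_inr_inl {i j : ℕ} (hj : j0 ≤ j) (hjn : j + 2 ≤ n) (hi : Odd i) :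
    IsStep n j0 i (Sum.inr j, Sum.inl (j + 1)) :=
  ⟨⟨rfl, hj, hjn⟩, fun _ => ⟨_, rfl⟩, fun _ => hi, False.elim⟩

theorem isStep_inr_inr {i j j' : ℕ} (hj : j0 ≤ j') (hjj : j' < j) (hjn : j + 2 ≤ n)
    (hi : Even i) : IsStep n j0 i (Sum.inr j, Sum.inr j') :=
  ⟨⟨by omega, by omega, hjn, hj, by omega⟩, fun h => absurd hi (Nat.not_even_iff_odd.2 h),
    False.elim, fun _ => hi⟩

end Admissible

section BackPath

variable {n j0 k : ℕ} {l : List V}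

/-- Prepends the step between `k` and `k + 2` to a backwards list starting at `k + 1`, cancelling
the backtrack `k + 2, k + 1, k + 2` if there is one. -/
def lengthen (k : ℕ) : List V → List V
  | a :: b :: l =>
    if b = Sum.inl (k + 2) then Sum.inl k :: b :: l
    else Sum.inl k :: Sum.inl (k + 2) :: a :: b :: l
  | l => l

theorem lengthen_of_eq (k : ℕ) (a : V) (l : List V) :
    lengthen k (a :: Sum.inl (k + 2) :: l) = Sum.inl k :: Sum.inl (k + 2) :: l := by
  simp [lengthen]

theorem lengthen_of_ne (k : ℕ) (a : V) {b : V} (hb : b ≠ Sum.inl (k + 2)) (l : List V) :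
    lengthen k (a :: b :: l) = Sum.inl k :: Sum.inl (k + 2) :: a :: b :: l := by
  simp [lengthen, hb]

/-- The recursive description of the super `T`-paths from `n` to `k`, as lists of vertices running
backwards from `k` to `n`. -/
inductive BackPath (n : ℕ) : ℕ → List V → Prop
  | edge {k : ℕ} (hk : k + 1 = n) : BackPath n k [Sum.inl k, Sum.inl n]
  | lengthen {k : ℕ} {l : List V} (h : BackPath n (k + 1) l) : BackPath n k (lengthen k l)
  | skip {k : ℕ} {l : List V} (h : BackPath n (k + 2) l) :
      BackPath n k (Sum.inl k :: Sum.inl (k + 1) :: l)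
  | jump {k i : ℕ} {l : List V} (hki : k < i) (h : BackPath n (i + 1) l) :
      BackPath n k (Sum.inl k :: Sum.inl (k + 1) :: Sum.inr k :: Sum.inr i :: l)

namespace BackPath

theorem lt (h : BackPath n k l) : k < n := by
  induction h <;> omega

theorem exists_eq_cons_cons (h : BackPath n k l) :
    ∃ t, l = Sum.inl k :: Sum.inl (k + 1) :: t ∨ l = Sum.inl k :: Sum.inl (k + 2) :: t := by
  induction h with
  | edge hk => exact ⟨[], .inl (hk ▸ rfl)⟩
  | @lengthen k _ _ ih =>
    obtain ⟨t, rfl | rfl⟩ := ih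
    · exact ⟨_, .inr (lengthen_of_eq ..)⟩
    · exact ⟨_, .inr (lengthen_of_ne k _ (by simp) t)⟩
  | skip | jump => exact ⟨_, .inl rfl⟩

theorem exists_eq_cons (h : BackPath n k l) : ∃ t, l = Sum.inl k :: t := by
  obtain ⟨t, rfl | rfl⟩ := h.exists_eq_cons_cons <;> exact ⟨_, rfl⟩

theorem lengthen_cases (h : BackPath n (k + 1) l) :
    ∃ t, (l = Sum.inl (k + 1) :: Sum.inl (k + 2) :: t ∧
        ZigZag.lengthen k l = Sum.inl k :: Sum.inl (k + 2) :: t) ∨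
      (l = Sum.inl (k + 1) :: Sum.inl (k + 3) :: t ∧ ZigZag.lengthen k l =
        Sum.inl k :: Sum.inl (k + 2) :: Sum.inl (k + 1) :: Sum.inl (k + 3) :: t) := by
  obtain ⟨t, rfl | rfl⟩ := h.exists_eq_cons_cons
  · exact ⟨t, .inl ⟨rfl, lengthen_of_eq ..⟩⟩
  · exact ⟨t, .inr ⟨rfl, lengthen_of_ne k _ (by simp) t⟩⟩

theorem even_length (h : BackPath n k l) : Even l.length := by
  induction h with
  | edge => exact even_two
  | lengthen h ih =>
    obtain ⟨t, ⟨rfl, hl⟩ | ⟨rfl, hl⟩⟩ := h.lengthen_cases <;>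
      simpa [hl, parity_simps] using ih
  | skip _ ih | jump _ _ ih => simpa [parity_simps] using ih

theorem getLast?_eq (h : BackPath n k l) : l.getLast? = some (Sum.inl n) := by
  induction h with
  | edge => rfl
  | lengthen h ih =>
    obtain ⟨t, ⟨rfl, hl⟩ | ⟨rfl, hl⟩⟩ := h.lengthen_cases <;> simpa [hl] using ih
  | skip h ih | jump _ h ih =>
    obtain ⟨t, rfl⟩ := h.exists_eq_cons
    simpa using ih

theorem lt_level_of_mem_tail (h : BackPath n k l) : ∀ x ∈ l.tail, 2 * k < level x := by
  induction h with
  | edge hk => simp [level, ← hk]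
  | @lengthen k _ h ih =>
    obtain ⟨t, ⟨rfl, hl⟩ | ⟨rfl, hl⟩⟩ := h.lengthen_cases <;> grind [level]
  | skip h ih | jump _ h ih =>
    obtain ⟨t, rfl⟩ := h.exists_eq_cons
    grind [level]

theorem isAdmissible_lengthen (h : BackPath n (k + 1) l) (hl : IsAdmissible n j0 l) (hj : 1 ≤ j0)
    (hjk : j0 ≤ k) : IsAdmissible n j0 (ZigZag.lengthen k l) := by
  have hkn := h.lt
  have heven := h.even_length
  have hlt := h.lt_level_of_mem_tail
  obtain ⟨t, ⟨rfl, ht⟩ | ⟨rfl, ht⟩⟩ := h.lengthen_cases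
  · rw [ht]
    refine (isAdmissible_cons_cons.1 hl).2.2.cons_of_forall_level_lt (isStep_inl_inl ?_ ?_) ?_ <;>
      grind [ZEdge, level]
  · have hnot (m : ℕ) : ¬ ZCrossPos n j0 (Sum.inl (k + 3), Sum.inl (k + 1)) m := by
      rintro ⟨w, hw, -⟩
      omega
    have hk3 : k + 3 ≤ n := (hl.1 _ (List.mem_cons_self ..)).joins.2.1
    have hcross : ZCrossPos n j0 (Sum.inl (k + 1), Sum.inl (k + 2)) (2 * (k + 1)) :=
      ⟨k + 1, .inl ⟨rfl, rfl⟩, by omega, hk3, rfl⟩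
    have hback : IsAdmissible n j0
        (Sum.inl (k + 2) :: Sum.inl (k + 1) :: Sum.inl (k + 3) :: t) := by
      refine hl.cons_of_not_cross (isStep_inl_inl ?_ fun _ => ⟨_, hcross⟩) ?_ ?_ hnot <;>
        grind [ZEdge, level]
    rw [ht]
    refine hback.cons_of_forall_level_lt (isStep_inl_inl ?_ ?_) ?_ <;> grind [ZEdge, level]

theorem isAdmissible_skip (h : BackPath n (k + 2) l) (hl : IsAdmissible n j0 l) (hj : 1 ≤ j0)
    (hjk : j0 ≤ k) : IsAdmissible n j0 (Sum.inl k :: Sum.inl (k + 1) :: l) := by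
  have hkn := h.lt
  have heven := h.even_length
  have hlt := h.lt_level_of_mem_tail
  obtain ⟨t, rfl⟩ := h.exists_eq_cons
  have hcross : ZCrossPos n j0 (Sum.inl (k + 2), Sum.inl (k + 1)) (2 * (k + 1)) :=
    ⟨k + 1, .inr ⟨rfl, rfl⟩, by omega, by omega, rfl⟩
  have htail : IsAdmissible n j0 (Sum.inl (k + 1) :: Sum.inl (k + 2) :: t) := by
    refine hl.cons_of_forall_level_lt (isStep_inl_inl ?_ fun _ => ⟨_, hcross⟩) ?_ <;>
      grind [ZEdge, level]
  refine htail.cons_of_forall_level_lt (isStep_inl_inl ?_ ?_) ?_ <;> grind [ZEdge, level]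

theorem isAdmissible_jump {i : ℕ} (hki : k < i) (h : BackPath n (i + 1) l)
    (hl : IsAdmissible n j0 l) (hj : 1 ≤ j0) (hjk : j0 ≤ k) :
    IsAdmissible n j0 (Sum.inl k :: Sum.inl (k + 1) :: Sum.inr k :: Sum.inr i :: l) := by
  have hkn := h.lt
  have heven := h.even_length
  have hlt := h.lt_level_of_mem_tail
  obtain ⟨t, rfl⟩ := h.exists_eq_cons
  have hi : IsAdmissible n j0 (Sum.inr i :: Sum.inl (i + 1) :: t) := by
    refine hl.cons_of_forall_level_lt (isStep_inl_inr ?_ ?_ ?_) ?_ <;> grind [level]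
  have hik : IsAdmissible n j0 (Sum.inr k :: Sum.inr i :: Sum.inl (i + 1) :: t) := by
    refine hi.cons_of_forall_level_lt (isStep_inr_inr hjk hki ?_ ?_) ?_ <;> grind [level]
  have hk : IsAdmissible n j0
      (Sum.inl (k + 1) :: Sum.inr k :: Sum.inr i :: Sum.inl (i + 1) :: t) := by
    refine hik.cons_of_not_cross (isStep_inr_inl hjk ?_ ?_) ?_ ?_ (fun _ => id) <;> grind [level]
  refine hk.cons_of_forall_level_lt (isStep_inl_inl ?_ ?_) ?_ <;> grind [ZEdge, level]

theorem isAdmissible (h : BackPath n k l) (hj : 1 ≤ j0) (hjk : j0 ≤ k) : IsAdmissible n j0 l := by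
  induction h with
  | edge hk =>
    refine isAdmissible_singleton.cons_of_forall_level_lt (isStep_inl_inl ?_ ?_) ?_ <;>
      grind [ZEdge, level]
  | lengthen h ih => exact h.isAdmissible_lengthen (ih (by omega)) hj hjk
  | skip h ih => exact h.isAdmissible_skip (ih (by omega)) hj hjk
  | jump hki h ih => exact h.isAdmissible_jump hki (ih (by omega)) hj hjk

end BackPath

end BackPath

section IsPartialPath

variable {n j0 b k v : ℕ} {a c : V} {l : List V}

/-- The final part `l`, listed backwards, of a super `T`-path from `n` to `j0`, with the crossing
positions bounded below by `b`.  Peeling off vertices while raising `b` is the induction that finds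
the recursive structure of a super `T`-path. -/
structure IsPartialPath (n j0 b : ℕ) (l : List V) : Prop where
  adm : IsAdmissible n j0 l
  last : l.getLast? = some (Sum.inl n)
  le_cross : ∀ s ∈ backSteps l, ∀ m, ZCrossPos n j0 s.2 m → b ≤ m

namespace IsPartialPath

theorem tail (h : IsPartialPath n j0 b (a :: c :: l)) : IsPartialPath n j0 b (c :: l) :=
  ⟨(isAdmissible_cons_cons.1 h.adm).2.2, by simpa using h.last,
    fun s hs => h.le_cross s (List.mem_cons_of_mem _ hs)⟩

theorem tail_of_cross (h : IsPartialPath n j0 b (a :: c :: l)) {m : ℕ}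
    (hm : ZCrossPos n j0 (c, a) m) : IsPartialPath n j0 (m + 1) (c :: l) :=
  ⟨h.tail.adm, h.tail.last,
    fun s hs m' hm' => ((isAdmissible_cons_cons.1 h.adm).2.1 s hs).2 m m' hm hm'⟩

theorem isStep (h : IsPartialPath n j0 b (a :: c :: l)) : IsStep n j0 l.length (c, a) :=
  (isAdmissible_cons_cons.1 h.adm).1

theorem exists_next (h : IsPartialPath n j0 b (Sum.inl v :: l)) (hv : 2 * v ≤ b + 1)
    (hl : Odd l.length) : ∃ u t, (u = v + 1 ∨ u = v + 2) ∧ l = Sum.inl u :: t := by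
  obtain - | ⟨u | i, t⟩ := l
  · simp at hl
  · suffices v ≤ u by
      have huv : ZEdge n u v := h.isStep.joins
      exact ⟨u, t, by grind [ZEdge], rfl⟩
    obtain - | ⟨y, t⟩ := t
    · obtain rfl : u = n := by simpa using h.last
      exact h.isStep.joins.2.2.2.1
    · obtain ⟨m, hm⟩ := h.tail.isStep.cross (by simpa [parity_simps] using hl)
      have hmu : m ≤ 2 * u := hm.eq_min_level h.tail.isStep.joins ▸ min_le_right _ _
      have := h.tail.le_cross _ (List.mem_cons_self ..) m hm
      omega
  · have := h.isStep.sig trivial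
    grind

theorem exists_of_inr (h : IsPartialPath n j0 b (Sum.inr k :: l)) (hl : Odd l.length) :
    ∃ i t, l = Sum.inr i :: Sum.inl (i + 1) :: t ∧ b ≤ 2 * i + 1 ∧
      IsPartialPath n j0 (2 * i + 2) (Sum.inl (i + 1) :: t) := by
  obtain - | ⟨z | i, t⟩ := l
  · simp at hl
  · have := h.isStep.sig trivial
    grind
  · obtain - | ⟨z | j, t⟩ := t
    · simpa using h.last
    · obtain rfl : z = i + 1 := h.tail.isStep.joins.1
      exact ⟨i, t, rfl, h.tail.le_cross _ (List.mem_cons_self ..) _ rfl, h.tail.tail_of_cross rfl⟩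
    · have := h.tail.isStep.tau trivial
      grind

theorem backPath_of_head?_ne
    (ih : ∀ b v t, t.length < l.length → 2 * v ≤ b + 1 → Odd t.length →
      IsPartialPath n j0 b (Sum.inl v :: t) → BackPath n v (Sum.inl v :: t))
    (h : IsPartialPath n j0 b (Sum.inl (k + 1) :: l)) (hl : Even l.length)
    (hk : l.head? ≠ some (Sum.inl k)) : BackPath n k (Sum.inl k :: Sum.inl (k + 1) :: l) := by
  obtain - | ⟨y | i, t⟩ := l
  · obtain rfl : k + 1 = n := by simpa using h.last
    exact .edge rfl
  · obtain ⟨m, hm⟩ := h.isStep.cross (by simpa [parity_simps] using hl)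
    obtain ⟨rfl, rfl⟩ : y = k + 2 ∧ m = 2 * (k + 1) := by grind [ZCrossPos]
    exact .skip (ih _ (k + 2) t (by simp) le_rfl (by simpa [parity_simps] using hl)
      (h.tail_of_cross hm))
  · obtain rfl : k = i := Nat.succ_injective h.isStep.joins.1
    obtain ⟨i, t, rfl, hki, hi⟩ :=
      (h.tail_of_cross rfl).exists_of_inr (by simpa [parity_simps] using hl)
    exact .jump (by omega) (ih _ (i + 1) t (by grind) (by omega) (by grind) hi)

theorem backPath (h : IsPartialPath n j0 b (Sum.inl v :: l)) (hv : 2 * v ≤ b + 1)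
    (hl : Odd l.length) : BackPath n v (Sum.inl v :: l) := by
  induction hlen : l.length using Nat.strong_induction_on generalizing b v l with | _ d ih
  have ih (b v : ℕ) (t : List V) (htd : t.length < d) (hv : 2 * v ≤ b + 1) (ht : Odd t.length)
      (h : IsPartialPath n j0 b (Sum.inl v :: t)) : BackPath n v (Sum.inl v :: t) :=
    ih _ htd h hv ht rfl
  obtain ⟨u, t, rfl | rfl, rfl⟩ := h.exists_next hv hl
  · refine h.tail.backPath_of_head?_ne (fun b v s hs => ih b v s (by grind)) (by grind) ?_
    obtain - | ⟨y, t⟩ := t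
    · simp
    · simpa using h.adm.ne_of_cons_cons.symm
  · by_cases hback : t.head? = some (Sum.inl (v + 1))
    · obtain ⟨t, rfl⟩ := List.head?_eq_some_iff.1 hback
      obtain ⟨m, hm⟩ := h.tail.isStep.cross (by grind)
      have hmv : m = 2 * (v + 1) := by
        simpa [level] using hm.eq_min_level h.tail.isStep.joins
      have hpart := h.tail.tail_of_cross hm
      obtain ⟨y, s, -, rfl⟩ := hpart.exists_next (by omega) (by grind)
      have hne : (Sum.inl y : V) ≠ Sum.inl (v + 2) := h.tail.adm.ne_of_cons_cons.symm
      rw [← lengthen_of_ne v _ hne]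
      exact (ih _ (v + 1) _ (by grind) (by omega) (by grind) hpart).lengthen
    · rw [← lengthen_of_eq v (Sum.inl (v + 1))]
      exact (h.tail.backPath_of_head?_ne (fun b v s hs => ih b v s (by grind)) (by grind)
        hback).lengthen

end IsPartialPath

end IsPartialPath

section SuperTPath

variable {n j0 : ℕ}

theorem backSteps_reverse_ofFn {len : ℕ} (v : Fin (len + 1) → V) :
    backSteps (List.ofFn v).reverse =
      (List.ofFn fun i : Fin len => (i.val, v i.castSucc, v i.succ)).reverse := by
  induction len with
  | zero => simp [backSteps]
  | succ len ih =>
    have ih := ih fun i => v i.castSucc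
    simp only [List.ofFn_succ_last (f := v), List.ofFn_succ_last (n := len), List.reverse_append,
      List.reverse_singleton, List.singleton_append] at ih ⊢
    simp [backSteps, ih]

theorem isAdmissible_reverse_ofFn {len : ℕ} {v : Fin (len + 1) → V} :
    IsAdmissible n j0 (List.ofFn v).reverse ↔
      (∀ i : Fin len, IsStep n j0 i (v i.castSucc, v i.succ)) ∧
        ∀ i i' : Fin len, i < i' →
          CrossesBefore n j0 (v i'.castSucc, v i'.succ) (v i.castSucc, v i.succ) := by
  simp only [IsAdmissible, backSteps_reverse_ofFn, List.pairwise_reverse, List.pairwise_ofFn,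
    List.mem_reverse, List.forall_mem_ofFn_iff]

theorem head?_reverse_ofFn {α : Type*} {len : ℕ} (v : Fin (len + 1) → α) :
    (List.ofFn v).reverse.head? = some (v (Fin.last len)) := by
  simp only [List.head?_reverse, List.ofFn_succ_last, List.getLast?_append, List.getLast?_singleton,
    Option.some_or]

theorem getLast?_reverse_ofFn {α : Type*} {len : ℕ} (v : Fin (len + 1) → α) :
    (List.ofFn v).reverse.getLast? = some (v 0) := by
  simp [List.getLast?_reverse, List.ofFn_succ]

namespace SuperTPath

/-- The vertices of a super `T`-path, from its end to its start. -/
def backList {rev : Bool} (t : SuperTPath n j0 rev) : List V :=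
  (List.ofFn t.vert).reverse

theorem isPartialPath_backList (t : SuperTPath n j0 true) :
    IsPartialPath n j0 (2 * j0) t.backList := by
  have hadm : IsAdmissible n j0 t.backList := isAdmissible_reverse_ofFn.2
    ⟨fun i => ⟨t.joins i, t.even_cross i, t.sig_even i, t.tau_odd i⟩, fun i i' hi =>
      ⟨t.edges_distinct i i' hi.ne, fun m m' hm hm' => t.cross_mono i i' hi m' m hm' hm⟩⟩
  refine ⟨hadm, by rw [backList, getLast?_reverse_ofFn, t.first_eq, if_pos rfl],
    fun s hs m hm => ?_⟩
  have hjoin := (hadm.1 s hs).joins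
  obtain ⟨_, u | i, w | j⟩ := s <;> simp only [ZCrossPos, ZJoins] at hm hjoin <;> grind

theorem backPath_backList (t : SuperTPath n j0 true) : BackPath n j0 t.backList := by
  have hhead : t.backList.head? = some (Sum.inl j0) := by
    rw [backList, head?_reverse_ofFn, t.last_eq, if_pos rfl]
  have hlen : t.backList.length = t.len + 1 := by simp [backList]
  have hpart := t.isPartialPath_backList
  obtain ⟨l, hl⟩ := List.head?_eq_some_iff.1 hhead
  rw [hl] at hpart hlen ⊢
  exact hpart.backPath (Nat.le_succ _) (Nat.succ_injective hlen ▸ t.odd_len)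

theorem exists_backList_eq (hj : 1 ≤ j0) {l : List V} (h : BackPath n j0 l) :
    ∃ t : SuperTPath n j0 true, t.backList = l := by
  have hadm := h.isAdmissible hj le_rfl
  have heven := h.even_length
  have hlast := h.getLast?_eq
  have hhead : l.head? = some (Sum.inl j0) := by
    obtain ⟨t, rfl⟩ := h.exists_eq_cons
    rfl
  obtain ⟨len, hlen⟩ : ∃ len, l.length = len + 1 :=
    Nat.exists_eq_succ_of_ne_zero (by grind)
  obtain ⟨v, rfl⟩ : ∃ v : Fin (len + 1) → V, (List.ofFn v).reverse = l :=
    ⟨fun i => l.reverse.get (i.cast (by simp [hlen])), by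
      rw [List.reverse_eq_iff]
      exact List.ext_get (by simp [hlen]) fun i hi hi' => by rw [List.get_ofFn]; rfl⟩
  rw [head?_reverse_ofFn, Option.some_inj] at hhead
  rw [getLast?_reverse_ofFn, Option.some_inj] at hlast
  obtain ⟨hstep, hcross⟩ := isAdmissible_reverse_ofFn.1 hadm
  have hdistinct (i i' : Fin len) (hne : i ≠ i') :
      ¬ pairEqV (v i.castSucc, v i.succ) (v i'.castSucc, v i'.succ) := by
    obtain hi | hi := hne.lt_or_gt
    · exact (hcross i i' hi).1
    · have := (hcross i' i hi).1
      grind [pairEqV]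
  exact ⟨⟨len, v, by grind, hlast, hhead, fun i => (hstep i).joins, hdistinct,
    fun i => (hstep i).cross, fun i => (hstep i).sig, fun i => (hstep i).tau,
    fun i i' hi m m' hm hm' => (hcross i i' hi).2 m' m hm' hm⟩, rfl⟩

theorem backList_injective {rev : Bool} :
    Function.Injective (backList : SuperTPath n j0 rev → List V) := by
  rintro ⟨len, v, _⟩ ⟨len', v', _⟩ h
  have h := List.ofFn_inj'.1 (List.reverse_injective h)
  obtain rfl : len = len' := by simpa using congrArg Sigma.fst h
  obtain rfl : v = v' := by simpa using h
  rfl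

theorem range_backList (hj : 1 ≤ j0) :
    Set.range (backList : SuperTPath n j0 true → List V) = {l | BackPath n j0 l} :=
  Set.Subset.antisymm (Set.range_subset_iff.2 backPath_backList) fun _ => exists_backList_eq hj

end SuperTPath

end SuperTPath

section BackPathSums

variable {n k : ℕ}

theorem setOf_backPath_of_succ_eq (hk : k + 1 = n) :
    {l | BackPath n k l} = {[Sum.inl k, Sum.inl n]} := by
  ext l
  refine ⟨fun h => ?_, by rintro rfl; exact .edge hk⟩
  cases h with
  | edge => rfl
  | lengthen h | skip h | jump _ h =>
    have := h.lt
    omega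

theorem setOf_backPath_of_le (hk : n ≤ k) : {l | BackPath n k l} = ∅ :=
  Set.eq_empty_of_forall_notMem fun _ h => hk.not_gt (BackPath.lt h)

theorem setOf_backPath_eq (hk : k + 2 ≤ n) :
    {l | BackPath n k l} = lengthen k '' {l | BackPath n (k + 1) l} ∪
      (fun l => Sum.inl k :: Sum.inl (k + 1) :: l) '' ({l | BackPath n (k + 2) l} ∪
        ⋃ i ∈ Set.Icc (k + 1) (n - 2),
          (fun l => Sum.inr k :: Sum.inr i :: l) '' {l | BackPath n (i + 1) l}) := by
  ext l
  simp only [Set.image_union, Set.image_iUnion₂, Set.image_image, Set.mem_union, Set.mem_image,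
    Set.mem_iUnion, Set.mem_ofPred_eq, exists_prop, Set.mem_Icc]
  constructor
  · intro h
    cases h with
    | edge => omega
    | lengthen h => exact .inl ⟨_, h, rfl⟩
    | skip h => exact .inr (.inl ⟨_, h, rfl⟩)
    | @jump _ i l hki h =>
      have hin := h.lt
      exact .inr (.inr ⟨i, by omega, _, h, rfl⟩)
  · rintro (⟨l, h, rfl⟩ | ⟨l, h, rfl⟩ | ⟨i, hi, l, h, rfl⟩)
    · exact h.lengthen
    · exact h.skip
    · exact .jump (by omega) h

theorem finite_setOf_backPath (n k : ℕ) : {l | BackPath n k l}.Finite := by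
  induction hd : n - k using Nat.strong_induction_on generalizing k with | _ d ih
  obtain h | h | h := lt_trichotomy (k + 1) n
  · have ih (k' : ℕ) (hk' : k < k') : {l | BackPath n k' l}.Finite := ih (n - k') (by omega) k' rfl
    rw [setOf_backPath_eq (by omega)]
    exact ((ih (k + 1) (by omega)).image _).union (((ih (k + 2) (by omega)).union
      ((Set.finite_Icc _ _).biUnion fun i hi => (ih (i + 1) (by grind)).image _)).image _)
  · exact setOf_backPath_of_succ_eq h ▸ Set.finite_singleton _
  · rw [setOf_backPath_of_le (by omega)]
    exact Set.finite_empty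

theorem injOn_lengthen (n k : ℕ) : Set.InjOn (lengthen k) {l | BackPath n (k + 1) l} := by
  have hnotMem (l : List V) (hl : BackPath n (k + 1) l) : Sum.inl (k + 1) ∉ l.tail :=
    fun hmem => (hl.lt_level_of_mem_tail _ hmem).false
  intro l hl l' hl' h
  have := hnotMem l hl
  have := hnotMem l' hl'
  obtain ⟨t, ⟨rfl, ht⟩ | ⟨rfl, ht⟩⟩ := BackPath.lengthen_cases hl <;>
    obtain ⟨t', ⟨rfl, ht'⟩ | ⟨rfl, ht'⟩⟩ := BackPath.lengthen_cases hl' <;>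
    rw [ht, ht'] at h <;> grind

theorem finsum_iUnion_jump {M : Type*} [AddCommMonoid M] (f : List V → M) (n k : ℕ) :
    ∑ᶠ l ∈ ⋃ i ∈ Set.Icc (k + 1) (n - 2),
        (fun l => Sum.inr k :: Sum.inr i :: l) '' {l | BackPath n (i + 1) l}, f l =
      ∑ i ∈ Finset.Icc (k + 1) (n - 2), ∑ᶠ l ∈ {l | BackPath n (i + 1) l},
        f (Sum.inr k :: Sum.inr i :: l) := by
  rw [finsum_mem_biUnion _ (Set.finite_Icc _ _)
    fun i _ => (finite_setOf_backPath n (i + 1)).image _, ← Finset.coe_Icc, finsum_mem_coe_finset]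
  · exact Finset.sum_congr rfl fun i _ => finsum_mem_image (by simp [Set.InjOn])
  · intro i _ j _ hij
    rw [Function.onFun, Set.disjoint_left]
    rintro _ ⟨l, -, rfl⟩ ⟨l', -, h⟩
    simp [hij.symm] at h

theorem finsum_backPath {M : Type*} [AddCommMonoid M] (f : List V → M) (hk : k + 2 ≤ n) :
    ∑ᶠ l ∈ {l | BackPath n k l}, f l = ∑ᶠ l ∈ {l | BackPath n (k + 1) l}, f (lengthen k l) +
      (∑ᶠ l ∈ {l | BackPath n (k + 2) l}, f (Sum.inl k :: Sum.inl (k + 1) :: l) +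
        ∑ i ∈ Finset.Icc (k + 1) (n - 2), ∑ᶠ l ∈ {l | BackPath n (i + 1) l},
          f (Sum.inl k :: Sum.inl (k + 1) :: Sum.inr k :: Sum.inr i :: l)) := by
  have hlengthen := (finite_setOf_backPath n (k + 1)).image (lengthen k)
  have hskip := finite_setOf_backPath n (k + 2)
  have hjump := (Set.finite_Icc (k + 1) (n - 2)).biUnion fun i _ =>
    (finite_setOf_backPath n (i + 1)).image fun l => Sum.inr k :: Sum.inr i :: l
  rw [setOf_backPath_eq hk, finsum_mem_union _ hlengthen ((hskip.union hjump).image _),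
    finsum_mem_image (injOn_lengthen n k), finsum_mem_image (by simp [Set.InjOn]),
    finsum_mem_union _ hskip hjump, finsum_iUnion_jump]
  · simp only [Set.disjoint_left, Set.mem_iUnion]
    rintro l hl ⟨i, -, l', -, rfl⟩
    simpa using BackPath.exists_eq_cons hl
  · rw [Set.disjoint_left]
    rintro _ ⟨l, hl, rfl⟩ ⟨l', -, h⟩
    obtain ⟨t, ⟨-, ht⟩ | ⟨-, ht⟩⟩ := BackPath.lengthen_cases hl <;> simp [ht] at h

end BackPathSums

section SortedProducts

variable {α : Type*} (le : α → α → Bool)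

theorem insB_append_singleton {x a : α} (h : le x a = true) (l : List α) :
    insB le x (l ++ [a]) = insB le x l ++ [a] := by
  induction l with
  | nil => simp [insB, h]
  | cons y l ih => by_cases hxy : le x y = true <;> simp [insB, hxy, ih]

theorem sortB_append_of_before {a : α} {l : List α} (h : ∀ x ∈ l, le x a = true) :
    sortB le (l ++ [a]) = sortB le l ++ [a] := by
  induction l with
  | nil => rfl
  | cons x l ih =>
    rw [List.forall_mem_cons] at h
    simp [sortB, ih h.2, insB_append_singleton le h.1]

theorem sortB_append_of_not_before {a : α} {l : List α} (h : ∀ x ∈ l, le x a = false) :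
    sortB le (l ++ [a]) = a :: sortB le l := by
  induction l with
  | nil => rfl
  | cons x l ih =>
    rw [List.forall_mem_cons] at h
    simp [sortB, ih h.2, insB, h.1]

theorem sortB_posBefore_append (n : ℕ) {k : ℕ} {l : List ℕ} (h : ∀ x ∈ l, k < x) :
    sortB (posBefore n) (l ++ [k]) =
      if thetaRight n k then k :: sortB (posBefore n) l else sortB (posBefore n) l ++ [k] := by
  have hbefore (x : ℕ) (hx : x ∈ l) : posBefore n x k = !thetaRight n k := by
    simp [posBefore, h x hx, (h x hx).not_gt]
  split_ifs with hk
  · exact sortB_append_of_not_before _ fun x hx => by simp [hbefore x hx, hk]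
  · exact sortB_append_of_before _ fun x hx => by simp [hbefore x hx, hk]

end SortedProducts

section OddWeight

variable {n k i j : ℕ} {θ : ℕ → A} {l : List V}

/-- Multiplication by `θ_k` on the side on which the positive order puts `θ_k` relative to the
triangles of larger index. -/
def ordMul (n : ℕ) (θ : ℕ → A) (k : ℕ) : A →+ A :=
  if thetaRight n k then AddMonoidHom.mulLeft (θ k) else AddMonoidHom.mulRight (θ k)

theorem ordMul_apply (n : ℕ) (θ : ℕ → A) (k : ℕ) (x : A) :
    ordMul n θ k x = if thetaRight n k then θ k * x else x * θ k := by
  rw [ordMul, apply_ite DFunLike.coe, ite_apply]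
  rfl

theorem ordMul_mul_of_commute {p : A} (hp : Commute p (θ k)) (x : A) :
    ordMul n θ k (p * x) = p * ordMul n θ k x := by
  simp only [ordMul_apply]
  split_ifs
  · rw [← mul_assoc, ← hp.eq, mul_assoc]
  · rw [mul_assoc]

theorem ordMul_eq_mul_of_commute {x : A} (hx : Commute x (θ k)) : ordMul n θ k x = x * θ k := by
  simpa [ordMul_apply] using fun _ => hx.eq.symm

theorem semiconjBy_ordMul {y x x' : A} (hx : SemiconjBy y x x')
    (hk : SemiconjBy y (θ k) (-θ k)) : SemiconjBy y (ordMul n θ k x) (-ordMul n θ k x') := by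
  simp only [ordMul_apply]
  split_ifs
  · simpa using hk.mul_right hx
  · simpa using hx.mul_right hk

/-- The indices of the `σ`-edges of a path listed backwards, in the order of the path. -/
def sigIdxs (l : List V) : List ℕ :=
  (backSteps l).reverse.filterMap fun s => sigIdx s.2

/-- The odd part of the weight of a path listed backwards. -/
def oddWt (n : ℕ) (θ : ℕ → A) (l : List V) : A :=
  ((sortB (posBefore n) (sigIdxs l)).map θ).prod

theorem sigIdxs_cons_cons (a b : V) (l : List V) :
    sigIdxs (a :: b :: l) = sigIdxs (b :: l) ++ (sigIdx (b, a)).toList := by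
  simp only [sigIdxs, backSteps, List.reverse_cons, List.filterMap_append]
  cases h : sigIdx (b, a) <;> simp [h]

theorem sigIdxs_lengthen (h : BackPath n (k + 1) l) : sigIdxs (lengthen k l) = sigIdxs l := by
  obtain ⟨t, ⟨rfl, ht⟩ | ⟨rfl, ht⟩⟩ := h.lengthen_cases <;> simp [ht, sigIdxs_cons_cons, sigIdx]

theorem sigIdxs_skip (h : BackPath n (k + 2) l) :
    sigIdxs (Sum.inl k :: Sum.inl (k + 1) :: l) = sigIdxs l := by
  obtain ⟨t, rfl⟩ := h.exists_eq_cons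
  simp [sigIdxs_cons_cons, sigIdx]

theorem sigIdxs_jump (h : BackPath n (i + 1) l) :
    sigIdxs (Sum.inl k :: Sum.inl (k + 1) :: Sum.inr k :: Sum.inr i :: l) =
      sigIdxs l ++ [i] ++ [k] := by
  obtain ⟨t, rfl⟩ := h.exists_eq_cons
  simp [sigIdxs_cons_cons, sigIdx]

theorem BackPath.le_of_mem_sigIdxs (h : BackPath n k l) : ∀ x ∈ sigIdxs l, k ≤ x := by
  induction h with
  | edge => simp [sigIdxs, backSteps, sigIdx]
  | lengthen h ih => grind [sigIdxs_lengthen h]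
  | skip h ih => grind [sigIdxs_skip h]
  | @jump k _ _ _ h ih => grind [sigIdxs_jump (k := k) h]

theorem prod_map_sortB_posBefore_append {s : List ℕ} (h : ∀ x ∈ s, k < x) :
    ((sortB (posBefore n) (s ++ [k])).map θ).prod =
      ordMul n θ k ((sortB (posBefore n) s).map θ).prod := by
  rw [sortB_posBefore_append n h, ordMul_apply]
  split_ifs <;> simp

theorem oddWt_lengthen (h : BackPath n (k + 1) l) : oddWt n θ (lengthen k l) = oddWt n θ l := by
  rw [oddWt, sigIdxs_lengthen h, oddWt]

theorem oddWt_skip (h : BackPath n (k + 2) l) :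
    oddWt n θ (Sum.inl k :: Sum.inl (k + 1) :: l) = oddWt n θ l := by
  rw [oddWt, sigIdxs_skip h, oddWt]

theorem oddWt_jump_eq_ordMul (hki : k < i) (h : BackPath n (i + 1) l) :
    oddWt n θ (Sum.inl k :: Sum.inl (k + 1) :: Sum.inr k :: Sum.inr i :: l) =
      ordMul n θ k (ordMul n θ i (oddWt n θ l)) := by
  have hle := h.le_of_mem_sigIdxs
  rw [oddWt, sigIdxs_jump h, prod_map_sortB_posBefore_append (by grind),
    prod_map_sortB_posBefore_append (by grind), oddWt]

-- The odd factors of a super `T`-path come in pairs, one pair for each `τ`-edge.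
theorem commute_oddWt (hθ : ∀ i, j < i → i ≤ n - 2 → θ j * θ i = -(θ i * θ j))
    (h : BackPath n k l) (hjk : j < k) : Commute (oddWt n θ l) (θ j) := by
  have hanti (i : ℕ) (hji : j < i) (hin : i ≤ n - 2) : SemiconjBy (θ j) (θ i) (-θ i) := by
    rw [SemiconjBy, neg_mul, hθ i hji hin]
  induction h with
  | edge => simp [oddWt, sigIdx, sigIdxs, backSteps, sortB]
  | lengthen h ih => exact oddWt_lengthen (θ := θ) h ▸ ih (by omega)
  | skip h ih => exact oddWt_skip (θ := θ) h ▸ ih (by omega)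
  | @jump k i l hki h ih =>
    have hin := h.lt
    have hi : SemiconjBy (θ j) (ordMul n θ i (oddWt n θ l)) (-ordMul n θ i (oddWt n θ l)) :=
      semiconjBy_ordMul (ih (by omega)).symm (hanti i (by omega) (by omega))
    have hk := semiconjBy_ordMul (n := n) hi (hanti k hjk (by omega))
    rw [map_neg, neg_neg] at hk
    exact oddWt_jump_eq_ordMul (θ := θ) hki h ▸ Commute.symm hk

theorem oddWt_jump (hθ : ∀ j, i < j → j ≤ n - 2 → θ i * θ j = -(θ j * θ i)) (hki : k < i)
    (h : BackPath n (i + 1) l) :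
    oddWt n θ (Sum.inl k :: Sum.inl (k + 1) :: Sum.inr k :: Sum.inr i :: l) =
      ordMul n θ k (oddWt n θ l * θ i) := by
  rw [oddWt_jump_eq_ordMul hki h, ordMul_eq_mul_of_commute (commute_oddWt hθ h i.lt_succ_self)]

end OddWeight

/-- A set `Pos` of central units, closed under multiplication and inversion, with a multiplicative
choice `sqrt` of square roots in `Pos`. -/
structure IsSqrtCone (Pos : Set A) (sqrt : A → A) : Prop where
  mul_mem : ∀ ⦃p⦄, p ∈ Pos → ∀ ⦃q⦄, q ∈ Pos → p * q ∈ Pos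
  inverse_mem : ∀ ⦃p⦄, p ∈ Pos → Ring.inverse p ∈ Pos
  commute : ∀ ⦃p⦄, p ∈ Pos → ∀ x, Commute p x
  isUnit : ∀ ⦃p⦄, p ∈ Pos → IsUnit p
  sqrt_mul_self : ∀ ⦃p⦄, p ∈ Pos → sqrt p * sqrt p = p
  sqrt_mem : ∀ ⦃p⦄, p ∈ Pos → sqrt p ∈ Pos
  sqrt_mul : ∀ ⦃p⦄, p ∈ Pos → ∀ ⦃q⦄, q ∈ Pos → sqrt (p * q) = sqrt p * sqrt q

namespace IsSqrtCone

variable {Pos : Set A} {sqrt : A → A} {p q r s b c e M N : A}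

theorem mem_center (h : IsSqrtCone Pos sqrt) (hp : p ∈ Pos) : p ∈ Subring.center A :=
  Subring.mem_center_iff.2 fun x => (h.commute hp x).eq.symm

theorem mul_inverse_mul_right (h : IsSqrtCone Pos sqrt) (hb : b ∈ Pos) (c : A) :
    b * Ring.inverse (c * b) = Ring.inverse c := by
  rw [Ring.mul_inverse_rev' (h.commute hb c).symm, Ring.mul_inverse_cancel_left _ _ (h.isUnit hb)]

theorem mul_inverse_mul_left (h : IsSqrtCone Pos sqrt) (hc : c ∈ Pos) (b : A) :
    c * Ring.inverse (c * b) = Ring.inverse b := by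
  rw [(h.commute hc b).eq, h.mul_inverse_mul_right hc]

theorem sqrt_mul_mul_self (h : IsSqrtCone Pos sqrt) (hp : p ∈ Pos) (hq : q ∈ Pos) :
    sqrt (p * p * q) = p * sqrt q := by
  rw [h.sqrt_mul (h.mul_mem hp hp) hq, h.sqrt_mul hp hp, h.sqrt_mul_self hp]

theorem sqrt_mul_sqrt (h : IsSqrtCone Pos sqrt) (hp : p ∈ Pos) (hq : q ∈ Pos) (hr : r ∈ Pos)
    (hs : s ∈ Pos) : sqrt (p * q) * sqrt (r * s) = sqrt (p * s * (r * q)) := by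
  rw [← h.sqrt_mul (h.mul_mem hp hq) (h.mul_mem hr hs), (h.commute hr s).eq,
    (h.commute hq s).mul_mul_mul_comm, (h.commute hq r).eq]

theorem inverse_mul_sqrt (h : IsSqrtCone Pos sqrt) (hb : b ∈ Pos) (hc : c ∈ Pos) (he : e ∈ Pos)
    (hM : M ∈ Pos) (hN : N ∈ Pos) :
    Ring.inverse b * sqrt (e * M * (c * N)) =
      c * sqrt (e * Ring.inverse (c * b)) * sqrt (M * N * Ring.inverse b) := by
  have hi := h.inverse_mem (h.mul_mem hc hb)
  have hb' := h.inverse_mem hb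
  rw [← h.sqrt_mul_mul_self hb' (h.mul_mem (h.mul_mem he hM) (h.mul_mem hc hN)),
    ← h.sqrt_mul_mul_self hc (h.mul_mem he hi),
    ← h.sqrt_mul (h.mul_mem (h.mul_mem hc hc) (h.mul_mem he hi))
      (h.mul_mem (h.mul_mem hM hN) hb')]
  have hcenter (b' c e i M N : Subring.center A) (hci : c * i = b') :
      b' * b' * (e * M * (c * N)) = c * c * (e * i) * (M * N * b') := by
    linear_combination -(b' * e * M * c * N) * hci
  exact congr_arg (fun x : Subring.center A => sqrt x) <|
    hcenter ⟨_, h.mem_center hb'⟩ ⟨c, h.mem_center hc⟩ ⟨e, h.mem_center he⟩ ⟨_, h.mem_center hi⟩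
      ⟨M, h.mem_center hM⟩ ⟨N, h.mem_center hN⟩ (Subtype.ext (h.mul_inverse_mul_left hc b))

end IsSqrtCone

section EdgeLengths

variable {A : Type*} {n k : ℕ} {Pos : Set A} {lam : ℕ → ℕ → A}

theorem lamE_of_le (lam : ℕ → ℕ → A) {u v : ℕ} (h : u ≤ v) : lamE lam u v = lam u v := by
  rw [lamE, min_eq_left h, max_eq_right h]

theorem lamE_of_ge (lam : ℕ → ℕ → A) {u v : ℕ} (h : v ≤ u) : lamE lam u v = lam v u := by
  rw [lamE, min_eq_right h, max_eq_left h]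

/-- The `λ`-lengths of the edges of the triangulation lie in `Pos`. -/
def PosEdges (n : ℕ) (Pos : Set A) (lam : ℕ → ℕ → A) : Prop :=
  ∀ u v, u < v → ZEdge n u v → lam u v ∈ Pos

theorem PosEdges.add_one_mem (h : PosEdges n Pos lam) (hk : 1 ≤ k) (hkn : k + 1 ≤ n) :
    lam k (k + 1) ∈ Pos :=
  h _ _ (by omega) ⟨by omega, by omega, by omega, by omega, by omega⟩

theorem PosEdges.add_two_mem (h : PosEdges n Pos lam) (hk : 1 ≤ k) (hkn : k + 2 ≤ n) :
    lam k (k + 2) ∈ Pos :=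
  h _ _ (by omega) ⟨by omega, by omega, by omega, by omega, by omega⟩

end EdgeLengths

section TotalWeight

variable {n k i : ℕ} {Pos : Set A} {sqrt : A → A} {lam : ℕ → ℕ → A} {θ : ℕ → A} {l : List V}

/-- The square root in the weight of the `σ`-edge `σ_i`. -/
noncomputable def sigRoot (lam : ℕ → ℕ → A) (sqrt : A → A) (i : ℕ) : A :=
  sqrt (lam i (i + 2) * Ring.inverse (lam i (i + 1) * lam (i + 1) (i + 2)))

theorem sigWt_eq (lam : ℕ → ℕ → A) (θ : ℕ → A) (sqrt : A → A) (i : ℕ) :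
    sigWt lam θ sqrt i = sigRoot lam sqrt i * θ i := by
  simp [sigWt, sigRoot, lamE_of_le]

theorem sigRoot_mem (hP : IsSqrtCone Pos sqrt) (hl : PosEdges n Pos lam) (hi : 1 ≤ i)
    (hin : i + 2 ≤ n) : sigRoot lam sqrt i ∈ Pos :=
  hP.sqrt_mem (hP.mul_mem (hl.add_two_mem hi hin) (hP.inverse_mem
    (hP.mul_mem (hl.add_one_mem hi (by omega)) (hl.add_one_mem (by omega) hin))))

/-- The even part of the weight of a path listed backwards. -/
noncomputable def evenWt (lam : ℕ → ℕ → A) (sqrt : A → A) (l : List V) : A :=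
  ((backSteps l).reverse.map fun s => stepWt lam sqrt s.1 s.2).prod

theorem wt_eq {j0 : ℕ} {rev : Bool} (t : SuperTPath n j0 rev) :
    wt n lam θ sqrt t = evenWt lam sqrt t.backList * oddWt n θ t.backList := by
  simp only [wt, evenWt, oddWt, sigIdxs, SuperTPath.backList, backSteps_reverse_ofFn,
    List.reverse_reverse]
  simp only [List.ofFn_eq_map, List.map_map, List.filterMap_map]
  rfl

theorem evenWt_cons_cons (a b : V) (l : List V) :
    evenWt lam sqrt (a :: b :: l) =
      evenWt lam sqrt (b :: l) * stepWt lam sqrt l.length (b, a) := by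
  simp [evenWt, backSteps]

theorem evenWt_lengthen (hb : IsUnit (lam (k + 1) (k + 2))) (h : BackPath n (k + 1) l) :
    evenWt lam sqrt (lengthen k l) =
      evenWt lam sqrt l * (Ring.inverse (lam (k + 1) (k + 2)) * lam k (k + 2)) := by
  have heven := h.even_length
  obtain ⟨t, ⟨rfl, ht⟩ | ⟨rfl, ht⟩⟩ := h.lengthen_cases
  all_goals
    have ht2 : t.length % 2 = 0 := by grind
    simp [ht, evenWt_cons_cons, stepWt, ht2, lamE_of_ge, lamE_of_le, mul_assoc, Nat.add_mod,
      Ring.mul_inverse_cancel_left _ _ hb]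

theorem evenWt_skip (h : BackPath n (k + 2) l) :
    evenWt lam sqrt (Sum.inl k :: Sum.inl (k + 1) :: l) =
      evenWt lam sqrt l * (Ring.inverse (lam (k + 1) (k + 2)) * lam k (k + 1)) := by
  have heven := h.even_length
  obtain ⟨t, rfl⟩ := h.exists_eq_cons
  have hodd : t.length % 2 = 1 := by grind
  simp [evenWt_cons_cons, stepWt, hodd, lamE_of_ge, mul_assoc, Nat.add_mod]

theorem evenWt_jump (h : BackPath n (i + 1) l) :
    evenWt lam sqrt (Sum.inl k :: Sum.inl (k + 1) :: Sum.inr k :: Sum.inr i :: l) =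
      evenWt lam sqrt l * (sigRoot lam sqrt i * (sigRoot lam sqrt k * lam k (k + 1))) := by
  have heven := h.even_length
  obtain ⟨t, rfl⟩ := h.exists_eq_cons
  have hodd : t.length % 2 = 1 := by grind
  simp [evenWt_cons_cons, stepWt, hodd, lamE_of_le, lamE_of_ge, sigRoot, mul_assoc, Nat.add_mod]

theorem evenWt_mem (hP : IsSqrtCone Pos sqrt) (hl : PosEdges n Pos lam) (hk : 1 ≤ k)
    (h : BackPath n k l) : evenWt lam sqrt l ∈ Pos := by
  induction h with
  | @edge k hkn =>
    subst hkn
    simpa [evenWt, backSteps, stepWt, lamE_of_ge] using hl.add_one_mem hk le_rfl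
  | @lengthen k l h ih =>
    have hkn := h.lt
    have hb := hl.add_one_mem (k := k + 1) (by omega) (by omega)
    rw [evenWt_lengthen (hP.isUnit hb) h]
    exact hP.mul_mem (ih (by omega))
      (hP.mul_mem (hP.inverse_mem hb) (hl.add_two_mem hk (by omega)))
  | @skip k l h ih =>
    have hkn := h.lt
    rw [evenWt_skip h]
    exact hP.mul_mem (ih (by omega)) (hP.mul_mem
      (hP.inverse_mem (hl.add_one_mem (by omega) (by omega))) (hl.add_one_mem hk (by omega)))
  | @jump k i l hki h ih =>
    have hin := h.lt
    rw [evenWt_jump h]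
    exact hP.mul_mem (ih (by omega)) (hP.mul_mem (sigRoot_mem hP hl (by omega) (by omega))
      (hP.mul_mem (sigRoot_mem hP hl hk (by omega)) (hl.add_one_mem hk (by omega))))

/-- The total weight of the super `T`-paths from `n` to `k`. -/
noncomputable def totalWt (n : ℕ) (lam : ℕ → ℕ → A) (θ : ℕ → A) (sqrt : A → A) (k : ℕ) : A :=
  ∑ᶠ t : SuperTPath n k true, wt n lam θ sqrt t

theorem totalWt_eq_finsum (hk : 1 ≤ k) :
    totalWt n lam θ sqrt k = ∑ᶠ l ∈ {l | BackPath n k l}, evenWt lam sqrt l * oddWt n θ l := by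
  rw [← SuperTPath.range_backList hk, finsum_mem_range SuperTPath.backList_injective, totalWt]
  simp only [wt_eq]

theorem totalWt_of_le (hk : 1 ≤ k) (hkn : n ≤ k) : totalWt n lam θ sqrt k = 0 := by
  rw [totalWt_eq_finsum hk, setOf_backPath_of_le hkn, finsum_mem_empty]

theorem totalWt_of_succ_eq (hk : 1 ≤ k) (hkn : k + 1 = n) :
    totalWt n lam θ sqrt k = lam k n := by
  subst hkn
  rw [totalWt_eq_finsum hk, setOf_backPath_of_succ_eq rfl, finsum_mem_singleton]
  simp [evenWt, oddWt, sigIdxs, sigIdx, backSteps, stepWt, sortB, lamE_of_ge]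

theorem finsum_jump_eq_totalWt_mul_sigWt (hP : IsSqrtCone Pos sqrt) (hl : PosEdges n Pos lam)
    (hθ : ∀ j, i < j → j ≤ n - 2 → θ i * θ j = -(θ j * θ i)) (hk : 1 ≤ k) (hki : k < i)
    (hin : i + 2 ≤ n) :
    ∑ᶠ l ∈ {l | BackPath n (i + 1) l},
        evenWt lam sqrt (Sum.inl k :: Sum.inl (k + 1) :: Sum.inr k :: Sum.inr i :: l) *
          oddWt n θ (Sum.inl k :: Sum.inl (k + 1) :: Sum.inr k :: Sum.inr i :: l) =
      lam k (k + 1) * sigRoot lam sqrt k *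
        ordMul n θ k (totalWt n lam θ sqrt (i + 1) * sigWt lam θ sqrt i) := by
  have hs := sigRoot_mem hP hl hk (by omega)
  have hsi := sigRoot_mem hP hl (i := i) (by omega) hin
  have hfin := finite_setOf_backPath n (i + 1)
  rw [totalWt_eq_finsum (by omega), finsum_mem_mul' _ _ hfin,
    AddMonoidHom.map_finsum_mem _ _ hfin, mul_finsum_mem' _ _ hfin]
  refine finsum_mem_congr rfl fun l h => ?_
  have hevenWt := evenWt_mem hP hl (by omega) h
  rw [evenWt_jump h, oddWt_jump hθ hki h, sigWt_eq,
    (hP.commute hsi _).symm.mul_mul_mul_comm (evenWt lam sqrt l),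
    ordMul_mul_of_commute (hP.commute (hP.mul_mem hevenWt hsi) _), ← mul_assoc (evenWt lam sqrt l),
    (hP.commute hs _).eq, (hP.commute (hP.mul_mem hevenWt hsi) _).eq, mul_assoc]

theorem totalWt_rec (hP : IsSqrtCone Pos sqrt) (hl : PosEdges n Pos lam)
    (hθ : ∀ i j, k < i → i < j → j ≤ n - 2 → θ i * θ j = -(θ j * θ i)) (hk : 1 ≤ k)
    (hkn : k + 2 ≤ n) :
    totalWt n lam θ sqrt k =
      totalWt n lam θ sqrt (k + 1) * (Ring.inverse (lam (k + 1) (k + 2)) * lam k (k + 2)) +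
      (totalWt n lam θ sqrt (k + 2) * (Ring.inverse (lam (k + 1) (k + 2)) * lam k (k + 1)) +
        lam k (k + 1) * sigRoot lam sqrt k * ordMul n θ k
          (∑ i ∈ Finset.Icc (k + 1) (n - 2),
            totalWt n lam θ sqrt (i + 1) * sigWt lam θ sqrt i)) := by
  have hc := hl.add_one_mem hk (by omega)
  have hb := hl.add_one_mem (k := k + 1) (by omega) hkn
  have he := hl.add_two_mem hk hkn
  rw [totalWt_eq_finsum hk, finsum_backPath _ hkn, map_sum, Finset.mul_sum]
  congr 1
  · rw [totalWt_eq_finsum (by omega), finsum_mem_mul' _ _ (finite_setOf_backPath n _)]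
    refine finsum_mem_congr rfl fun l h => ?_
    rw [evenWt_lengthen (hP.isUnit hb) h, oddWt_lengthen h,
      ((hP.commute (hP.mul_mem (hP.inverse_mem hb) he) _)).right_comm]
  congr 1
  · rw [totalWt_eq_finsum (by omega), finsum_mem_mul' _ _ (finite_setOf_backPath n _)]
    refine finsum_mem_congr rfl fun l h => ?_
    rw [evenWt_skip h, oddWt_skip h,
      ((hP.commute (hP.mul_mem (hP.inverse_mem hb) hc) _)).right_comm]
  refine Finset.sum_congr rfl fun i hi => ?_
  rw [Finset.mem_Icc] at hi
  exact finsum_jump_eq_totalWt_mul_sigWt hP hl (hθ i · (by omega)) hk (by omega) (by omega)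

end TotalWeight

/-- The downward super Ptolemy recursion for `λ_{k,n} = lamN k` and `[k,k+1,n] = muN k`. -/
structure IsFlipRecursion (n : ℕ) (Pos : Set A) (sqrt : A → A) (lam : ℕ → ℕ → A) (θ : ℕ → A)
    (lamN muN : ℕ → A) : Prop where
  lamN_mem : ∀ k, 1 ≤ k → k ≤ n - 2 → lamN k ∈ Pos
  lamN_sub_two : lamN (n - 2) = lam (n - 2) n
  lamN_sub_one : lamN (n - 1) = lam (n - 1) n
  muN_sub_two : muN (n - 2) = θ (n - 2)
  lamN_rec : ∀ k, 1 ≤ k → k ≤ n - 3 →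
    lam (k + 1) (k + 2) * lamN k
      = lam k (k + 2) * lamN (k + 1) + lam k (k + 1) * lamN (k + 2)
        + sqrt (lam k (k + 2) * lamN (k + 1) * (lam k (k + 1) * lamN (k + 2)))
          * (if thetaRight n k then θ k * muN (k + 1) else muN (k + 1) * θ k)
  muN_rec : ∀ k, 1 ≤ k → k ≤ n - 3 →
    muN k * sqrt (lamN k * lam (k + 1) (k + 2))
      = θ k * sqrt (lam k (k + 2) * lamN (k + 1))
        + muN (k + 1) * sqrt (lam k (k + 1) * lamN (k + 2))

/-- The `μ`-invariant `[k,k+1,n]`, normalised by `√(λ_{k,n}λ_{k+1,n}/λ_{k,k+1})`. -/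
noncomputable def normMu (sqrt : A → A) (lam : ℕ → ℕ → A) (lamN muN : ℕ → A) (k : ℕ) : A :=
  sqrt (lamN k * lamN (k + 1) * Ring.inverse (lam k (k + 1))) * muN k

namespace IsFlipRecursion

variable {n k : ℕ} {Pos : Set A} {sqrt : A → A} {lam : ℕ → ℕ → A} {θ lamN muN : ℕ → A}

theorem lamN_mem_of_lt (h : IsFlipRecursion n Pos sqrt lam θ lamN muN) (hl : PosEdges n Pos lam)
    (hk : 1 ≤ k) (hkn : k < n) : lamN k ∈ Pos := by
  obtain rfl | hkn := Nat.succ_le_iff.2 hkn |>.eq_or_lt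
  · have hlamN : lamN k = lam k (k + 1) := h.lamN_sub_one
    exact hlamN ▸ hl.add_one_mem hk le_rfl
  · exact h.lamN_mem k hk (by omega)

theorem normMu_of_add_two_eq (h : IsFlipRecursion n Pos sqrt lam θ lamN muN)
    (hP : IsSqrtCone Pos sqrt) (hl : PosEdges n Pos lam) (hk : 1 ≤ k) (hkn : k + 2 = n) :
    normMu sqrt lam lamN muN k = lamN (k + 1) * sigWt lam θ sqrt k := by
  subst hkn
  have hlamN : lamN k = lam k (k + 2) := h.lamN_sub_two
  have hlamN' : lamN (k + 1) = lam (k + 1) (k + 2) := h.lamN_sub_one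
  have hmuN : muN k = θ k := h.muN_sub_two
  have hc := hl.add_one_mem hk (by omega)
  have hb := hl.add_one_mem (k := k + 1) (by omega) le_rfl
  have he := hl.add_two_mem hk le_rfl
  rw [normMu, hlamN, hlamN', hmuN, sigWt_eq, ← mul_assoc, sigRoot,
    ← hP.mul_inverse_mul_right hb (lam k (k + 1)), (hP.commute he _).eq,
    (hP.commute he _).mul_mul_mul_comm,
    hP.sqrt_mul_mul_self hb (hP.mul_mem he (hP.inverse_mem (hP.mul_mem hc hb)))]

theorem normMu_rec (h : IsFlipRecursion n Pos sqrt lam θ lamN muN) (hP : IsSqrtCone Pos sqrt)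
    (hl : PosEdges n Pos lam) (hk : 1 ≤ k) (hkn : k + 3 ≤ n) :
    normMu sqrt lam lamN muN k =
      lamN (k + 1) * sigWt lam θ sqrt k + normMu sqrt lam lamN muN (k + 1) := by
  have hL := h.lamN_mem_of_lt hl hk (by omega)
  have hM := h.lamN_mem_of_lt hl (k := k + 1) (by omega) (by omega)
  have hN := h.lamN_mem_of_lt hl (k := k + 2) (by omega) (by omega)
  have hc := hl.add_one_mem hk (by omega)
  have hb := hl.add_one_mem (k := k + 1) (by omega) (by omega)
  have he := hl.add_two_mem hk (by omega)
  have hi := hP.inverse_mem (hP.mul_mem hc hb)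
  set z := sqrt (lamN (k + 1) * Ring.inverse (lam k (k + 1) * lam (k + 1) (k + 2)))
  have hzL : z * sqrt (lamN k * lam (k + 1) (k + 2)) =
      sqrt (lamN k * lamN (k + 1) * Ring.inverse (lam k (k + 1))) := by
    rw [(hP.commute hL _).eq, hP.sqrt_mul_sqrt hM hi hb hL, (hP.commute hM _).eq,
      hP.mul_inverse_mul_right hb]
  have hzM : z * sqrt (lam k (k + 2) * lamN (k + 1)) = lamN (k + 1) * sigRoot lam sqrt k := by
    rw [hP.sqrt_mul_sqrt hM hi he hM, hP.sqrt_mul_mul_self hM (hP.mul_mem he hi), sigRoot]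
  have hzN : z * sqrt (lam k (k + 1) * lamN (k + 2)) =
      sqrt (lamN (k + 1) * lamN (k + 2) * Ring.inverse (lam (k + 1) (k + 2))) := by
    rw [hP.sqrt_mul_sqrt hM hi hc hN, hP.mul_inverse_mul_left hc]
  have hmul {p : A} (hp : p ∈ Pos) (x : A) : z * (x * sqrt p) = z * sqrt p * x := by
    rw [← (hP.commute (hP.sqrt_mem hp) x).eq, mul_assoc]
  have hmu := congr_arg (z * ·) (h.muN_rec k hk (by omega))
  simp only [mul_add] at hmu
  rw [hmul (hP.mul_mem hL hb), hmul (hP.mul_mem he hM), hmul (hP.mul_mem hc hN), hzL, hzM, hzN,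
    mul_assoc (lamN (k + 1)), ← sigWt_eq] at hmu
  exact hmu

theorem normMu_eq_sum (h : IsFlipRecursion n Pos sqrt lam θ lamN muN) (hP : IsSqrtCone Pos sqrt)
    (hl : PosEdges n Pos lam) (hk : 1 ≤ k) (hkn : k + 2 ≤ n) :
    normMu sqrt lam lamN muN k =
      ∑ i ∈ Finset.Icc k (n - 2), lamN (i + 1) * sigWt lam θ sqrt i := by
  induction hd : n - (k + 2) generalizing k with
  | zero =>
    obtain rfl : k + 2 = n := by omega
    rw [h.normMu_of_add_two_eq hP hl hk rfl, Nat.add_sub_cancel, Finset.Icc_self,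
      Finset.sum_singleton]
  | succ d ih =>
    rw [h.normMu_rec hP hl hk (by omega), ih (by omega) (by omega) (by omega),
      ← Finset.add_sum_Ioc_eq_sum_Icc (a := k) (by omega), Finset.Icc_add_one_left_eq_Ioc]

theorem lamN_eq (h : IsFlipRecursion n Pos sqrt lam θ lamN muN) (hP : IsSqrtCone Pos sqrt)
    (hl : PosEdges n Pos lam) (hk : 1 ≤ k) (hkn : k + 3 ≤ n) :
    lamN k =
      lamN (k + 1) * (Ring.inverse (lam (k + 1) (k + 2)) * lam k (k + 2)) +
      (lamN (k + 2) * (Ring.inverse (lam (k + 1) (k + 2)) * lam k (k + 1)) +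
        lam k (k + 1) * sigRoot lam sqrt k *
          ordMul n θ k (normMu sqrt lam lamN muN (k + 1))) := by
  have hM := h.lamN_mem_of_lt hl (k := k + 1) (by omega) (by omega)
  have hN := h.lamN_mem_of_lt hl (k := k + 2) (by omega) (by omega)
  have hc := hl.add_one_mem hk (by omega)
  have hb : lam (k + 1) (k + 2) ∈ Pos := hl.add_one_mem (by omega) (by omega)
  have he := hl.add_two_mem hk (by omega)
  have hb' := hP.inverse_mem hb
  have hroot := hP.sqrt_mem (hP.mul_mem (hP.mul_mem hM hN) hb')
  calc lamN k
      = Ring.inverse (lam (k + 1) (k + 2)) * (lam (k + 1) (k + 2) * lamN k) :=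
        (Ring.inverse_mul_cancel_left _ _ (hP.isUnit hb)).symm
    _ = Ring.inverse (lam (k + 1) (k + 2)) * lam k (k + 2) * lamN (k + 1) +
        (Ring.inverse (lam (k + 1) (k + 2)) * lam k (k + 1) * lamN (k + 2) +
          Ring.inverse (lam (k + 1) (k + 2)) *
            sqrt (lam k (k + 2) * lamN (k + 1) * (lam k (k + 1) * lamN (k + 2))) *
              ordMul n θ k (muN (k + 1))) := by
      simp only [h.lamN_rec k hk (by omega), ordMul_apply, mul_add, mul_assoc, add_assoc]
    _ = _ := by
      rw [hP.inverse_mul_sqrt hb hc he hM hN, ← (hP.commute hM _).eq, ← (hP.commute hN _).eq,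
        normMu, ordMul_mul_of_commute (hP.commute hroot _), mul_assoc _ (sqrt _), sigRoot]

theorem totalWt_eq (h : IsFlipRecursion n Pos sqrt lam θ lamN muN) (hP : IsSqrtCone Pos sqrt)
    (hl : PosEdges n Pos lam)
    (hθ : ∀ i j, 1 ≤ i → i < j → j ≤ n - 2 → θ i * θ j = -(θ j * θ i)) (hk : 1 ≤ k)
    (hkn : k < n) : totalWt n lam θ sqrt k = lamN k := by
  induction hd : n - k using Nat.strong_induction_on generalizing k with | _ d ih
  obtain rfl | hkn := Nat.succ_le_iff.2 hkn |>.eq_or_lt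
  · exact (totalWt_of_succ_eq hk rfl).trans h.lamN_sub_one.symm
  rw [totalWt_rec hP hl (fun i j hki => hθ i j (by omega)) hk hkn]
  obtain rfl | hkn' := Nat.succ_le_iff.2 hkn |>.eq_or_lt
  · have hb := hl.add_one_mem (k := k + 1) (by omega) (by omega)
    rw [totalWt_of_succ_eq (by omega) rfl, totalWt_of_le (by omega) le_rfl,
      Finset.Icc_eq_empty (by omega), Ring.mul_inverse_cancel_left _ _ (hP.isUnit hb)]
    simpa using h.lamN_sub_two.symm
  · have hsum : ∑ i ∈ Finset.Icc (k + 1) (n - 2),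
        totalWt n lam θ sqrt (i + 1) * sigWt lam θ sqrt i = normMu sqrt lam lamN muN (k + 1) := by
      rw [h.normMu_eq_sum hP hl (by omega) (by omega)]
      refine Finset.sum_congr rfl fun i hi => ?_
      rw [Finset.mem_Icc] at hi
      rw [ih _ (by omega) (by omega) (by omega) rfl]
    rw [h.lamN_eq hP hl hk hkn', hsum, ih _ (by omega) (by omega) (by omega) rfl,
      ih _ (by omega) (by omega) (by omega) rfl]

end IsFlipRecursion

theorem zigzag_mu_invariant_expansion_general {n : ℕ} {Pos : Set A} {sqrt : A → A}
    {lam : ℕ → ℕ → A} {θ lamN muN : ℕ → A} (hP : IsSqrtCone Pos sqrt) (hl : PosEdges n Pos lam)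
    (hθ : ∀ i j, 1 ≤ i → i < j → j ≤ n - 2 → θ i * θ j = -(θ j * θ i))
    (h : IsFlipRecursion n Pos sqrt lam θ lamN muN) (k : ℕ) (hk : 1 ≤ k) (hkn : k ≤ n - 2) :
    sqrt (lamN k * lamN (k + 1) * Ring.inverse (lam k (k + 1))) * muN k =
      ∑ i ∈ Finset.Icc k (n - 2),
        (∑ᶠ t : SuperTPath n (i + 1) true, wt n lam θ sqrt t) * sigWt lam θ sqrt i := by
  refine (h.normMu_eq_sum hP hl hk (by omega)).trans (Finset.sum_congr rfl fun i hi => ?_)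
  rw [Finset.mem_Icc] at hi
  rw [← h.totalWt_eq hP hl hθ (by omega) (by omega), totalWt]

/-- Theorem 6.4(a) of the paper.  Zig-zag triangulation of the
`n`-gon with triangles `θ_i = (i, i+1, i+2)` and the default orientation
`2 → 3 → ⋯ → n-1`.  We work in a `ℚ`-algebra with a positive cone `Pos` of
central invertible even elements and a coherent multiplicative choice of square
roots `sqrt`; `lam u v` (for `u < v`) are the `λ`-lengths of the edges of the
triangulation, `θ i` the odd `μ`-invariants of the triangles, and
`lamN k = λ_{k,n}`, `muN k = [k,k+1,n]` are defined by the downward super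
Ptolemy recursion obtained by flipping the arcs `(n-1,n-2), …, (k+2,k+1)`
(the order of the odd product in the `λ`-recursion being dictated by the
orientation: the `μ`-invariant of the triangle to the right of the oriented
flipped diagonal comes first).  Then for every `1 ≤ k ≤ n-2`:
`√(λ_{k,n}λ_{k+1,n}/λ_{k,k+1})·[k,k+1,n]
   = Σ_{i=k}^{n-2} Σ_{t ∈ 𝒯_{n,i+1}} wt(t)·wt(σ_i)`. -/
theorem zigzag_mu_invariant_expansion
    (A : Type*) [Ring A] [Algebra ℚ A] (n : ℕ) (hn : 4 ≤ n)
    (Pos : Set A) (sqrt : A → A)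
    (hPosAdd : ∀ p ∈ Pos, ∀ q ∈ Pos, p + q ∈ Pos)
    (hPosMul : ∀ p ∈ Pos, ∀ q ∈ Pos, p * q ∈ Pos)
    (hPosInv : ∀ p ∈ Pos, Ring.inverse p ∈ Pos)
    (hPosCentral : ∀ p ∈ Pos, ∀ x : A, p * x = x * p)
    (hPosUnit : ∀ p ∈ Pos, IsUnit p)
    (hsqrtSq : ∀ p ∈ Pos, sqrt p * sqrt p = p)
    (hsqrtMem : ∀ p ∈ Pos, sqrt p ∈ Pos)
    (hsqrtMul : ∀ p ∈ Pos, ∀ q ∈ Pos, sqrt (p * q) = sqrt p * sqrt q)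
    (lam : ℕ → ℕ → A) (θ : ℕ → A) (lamN muN : ℕ → A)
    (hlamP : ∀ u v, u < v → ZEdge n u v → lam u v ∈ Pos)
    (hlamNP : ∀ k, 1 ≤ k → k ≤ n - 2 → lamN k ∈ Pos)
    (hθ0 : ∀ i, 1 ≤ i → i ≤ n - 2 → θ i * θ i = 0)
    (hθanti : ∀ i j, 1 ≤ i → i ≤ n - 2 → 1 ≤ j → j ≤ n - 2 →
      θ i * θ j = -(θ j * θ i))
    -- base cases: `λ_{n-2,n}` and `λ_{n-1,n}` are edges, `[n-2,n-1,n] = θ_{n-2}`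
    (hbase1 : lamN (n - 2) = lam (n - 2) n)
    (hbase2 : lamN (n - 1) = lam (n - 1) n)
    (hbase3 : muN (n - 2) = θ (n - 2))
    -- downward super Ptolemy recursion for the λ-lengths (flip of `(k+1,k+2)`)
    (hrecLam : ∀ k, 1 ≤ k → k ≤ n - 3 →
      lam (k + 1) (k + 2) * lamN k
        = lam k (k + 2) * lamN (k + 1) + lam k (k + 1) * lamN (k + 2)
          + sqrt (lam k (k + 2) * lamN (k + 1) * (lam k (k + 1) * lamN (k + 2)))
            * (if thetaRight n k then θ k * muN (k + 1) else muN (k + 1) * θ k))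
    -- downward super Ptolemy recursion for the μ-invariants
    (hrecMu : ∀ k, 1 ≤ k → k ≤ n - 3 →
      muN k * sqrt (lamN k * lam (k + 1) (k + 2))
        = θ k * sqrt (lam k (k + 2) * lamN (k + 1))
          + muN (k + 1) * sqrt (lam k (k + 1) * lamN (k + 2))) :
    ∀ k, 1 ≤ k → k ≤ n - 2 →
      sqrt (lamN k * lamN (k + 1) * Ring.inverse (lam k (k + 1))) * muN k
        = ∑ i ∈ Finset.Icc k (n - 2),
            (∑ᶠ t : SuperTPath n (i + 1) true, wt n lam θ sqrt t)
              * sigWt lam θ sqrt i :=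
  zigzag_mu_invariant_expansion_general
    ⟨@hPosMul, @hPosInv, @hPosCentral, @hPosUnit, @hsqrtSq, @hsqrtMem, @hsqrtMul⟩ hlamP
    (fun i j hi hij hj => hθanti i j hi (by omega) (by omega) hj)
    ⟨hlamNP, hbase1, hbase2, hbase3, hrecLam, hrecMu⟩

end ZigZag
end

section
/- Pentagon relation: Let A be a ℚ-algebra. Let a, b, c, d, e, x_1, x_2 be central invertible even elements (sides and the two diagonals of a pentagon), with a coherent choice of central square roots (multiplicative on all products that occur, and extended to even-plus-odd elements by the rule √(A₀+βΣ) = √A₀ + (β/(2√A₀))Σ), and let θ_1, θ_2, θ_3 be odd elements: each squares to 0, any two anticommute, and they commute with even elements. Define successively: x_1·x_3 = ad + e·x_2 + √(a·d·e·x_2)·θ_1θ_2, θ_4 = (√(ad)·θ_1 − √(e x_2)·θ_2)/√(x_1x_3), θ_5 = (√(ad)·θ_2 + √(e x_2)·θ_1)/√(x_1x_3); x_2·x_4 = ac + b·x_3 + √(a·c·b·x_3)·θ_5θ_3, θ_6 = (√(ac)·θ_3 + √(b x_3)·θ_5)/√(x_2x_4), θ_7 = (√(ac)·θ_5 − √(b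 x_3)·θ_3)/√(x_2x_4); x_3·x_5 = ce + d·x_4 + √(c·d·e·x_4)·θ_4θ_7, θ_8 = (√(ce)·θ_4 − √(d x_4)·θ_7)/√(x_3x_5), θ_9 = (√(ce)·θ_7 + √(d x_4)·θ_4)/√(x_3x_5); x_4·x_6 = be + a·x_5 + √(a·b·e·x_5)·θ_9θ_6, θ_10 = (√(be)·θ_6 + √(a x_5)·θ_9)/√(x_4x_6), θ_11 = (√(be)·θ_9 − √(a x_5)·θ_6)/√(x_4x_6); x_5·x_7 = bd + c·x_6 + √(b·c·d·x_6)·θ_8θ_11, θ_12 = (√(bd)·θ_11 + √(c x_6)·θ_8)/√(x_5x_7), θ_13 = (√(bd)·θ_8 − √(c x_6)·θ_11)/√(x_5x_7). Then x_6 = x_1, x_7 = x_2, θ_10 = θ_1, θ_12 = −θ_2, and θ_13 = θ_3. -/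
/-!
Over a commutative ring of scalars containing the square roots of the `λ`-lengths, a super Ptolemy
flip turns the pair of `μ`-invariants `(σ, θ)` by the rotation with cosine `p / s` and sine `q / s`:
the nilpotent term by which `s ^ 2` differs from `p ^ 2 + q ^ 2` is a multiple of `σ * θ`, so it
kills both `σ` and `θ`. Flips can therefore be undone, and they are unchanged by the quarter turn
`(σ, θ) ↦ (θ, -σ)`, which commutes with rotations.

Eliminating `x₃` and `x₄` from three consecutive flips, of `x₁`, `x₂` and `x₃`, shows that `x₅` and
`θ₈` are also obtained, up to signs, by flipping the diagonal `x₂` of the initial triangulation.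
Applied to the last three of four consecutive flips and compared with the first one, this shows that
four flips restore the first diagonal and the `μ`-invariant of the triangle it cuts off. The
pentagon closes by applying this to the flips one to four, after quarter turns, and to the flips two
to five; `θ₂` reappears, with its sign changed, on undoing the fifth flip.
-/

/-- The super Ptolemy relations for one flip, with `p`, `q`, `s` standing for `√(ac)`, `√(bd)`,
`√(ef)` in a commutative ring `R` of even scalars. The scalars act on `A`, in which `(σ, θ)` are the
`μ`-invariants before and `(σ', θ')` those after the flip; denominators are cleared. -/
structure SuperPtolemyFlip {R A : Type*} [CommRing R] [Ring A] [Algebra R A]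
    (p q s : R) (σ θ σ' θ' : A) : Prop where
  len : s ^ 2 • (1 : A) = (p ^ 2 + q ^ 2) • (1 : A) + (p * q) • (σ * θ)
  left : s • σ' = p • σ - q • θ
  right : s • θ' = p • θ + q • σ

theorem mul_eq_neg_mul_of_mul_self_eq_zero {A S : Type*} [NonUnitalNonAssocRing A] [SetLike S A]
    [AddMemClass S A] {V : S} (hV : ∀ v ∈ V, v * v = 0) {u v : A} (hu : u ∈ V) (hv : v ∈ V) :
    u * v = -(v * u) := by
  have huv := hV (u + v) (add_mem hu hv)
  rw [add_mul, mul_add, mul_add, hV u hu, hV v hv, zero_add, add_zero] at huv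
  exact eq_neg_of_add_eq_zero_left huv

theorem mul_self_eq_zero_of_mem_span_triple {R A : Type*} [CommRing R] [Ring A] [Algebra R A]
    {u v w : A} (huu : u * u = 0) (hvv : v * v = 0) (hww : w * w = 0)
    (huv : u * v = -(v * u)) (huw : u * w = -(w * u)) (hvw : v * w = -(w * v)) :
    ∀ y ∈ Submodule.span R {u, v, w}, y * y = 0 := by
  intro y hy
  obtain ⟨i, j, k, rfl⟩ := Submodule.mem_span_triple.1 hy
  simp only [add_mul, mul_add, smul_mul_assoc, mul_smul_comm, huu, hvv, hww, huv, huw, hvw]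
  module

namespace SuperPtolemyFlip

variable {R A : Type*} [CommRing R] [Ring A] [Algebra R A]

section OneFlip

variable {V : Submodule R A} {p q s : R} {σ θ σ' θ' : A}

theorem left_mem (h : SuperPtolemyFlip p q s σ θ σ' θ') (hs : IsUnit s)
    (hσ : σ ∈ V) (hθ : θ ∈ V) : σ' ∈ V := by
  rw [← V.smul_mem_iff_of_isUnit hs, h.left]
  exact V.sub_mem (V.smul_mem p hσ) (V.smul_mem q hθ)

theorem right_mem (h : SuperPtolemyFlip p q s σ θ σ' θ') (hs : IsUnit s)
    (hσ : σ ∈ V) (hθ : θ ∈ V) : θ' ∈ V := by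
  rw [← V.smul_mem_iff_of_isUnit hs, h.right]
  exact V.add_mem (V.smul_mem p hθ) (V.smul_mem q hσ)

theorem quarterTurn (h : SuperPtolemyFlip p q s σ θ σ' θ') (hV : ∀ v ∈ V, v * v = 0)
    (hσ : σ ∈ V) (hθ : θ ∈ V) : SuperPtolemyFlip p q s θ (-σ) θ' (-σ') where
  len := by rw [h.len, mul_neg, ← mul_eq_neg_mul_of_mul_self_eq_zero hV hσ hθ]
  left := by rw [h.right, smul_neg, sub_neg_eq_add]
  right := by rw [smul_neg, h.left, smul_neg, neg_sub, sub_eq_neg_add]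

theorem quarterTurn_symm (h : SuperPtolemyFlip p q s σ θ σ' θ') (hV : ∀ v ∈ V, v * v = 0)
    (hσ : σ ∈ V) (hθ : θ ∈ V) : SuperPtolemyFlip p q s (-θ) σ (-θ') σ' where
  len := by rw [h.len, neg_mul, ← mul_eq_neg_mul_of_mul_self_eq_zero hV hσ hθ]
  left := by rw [smul_neg, h.right, smul_neg, neg_add']
  right := by rw [h.left, smul_neg, sub_eq_add_neg]

theorem sq_smul_left (h : SuperPtolemyFlip p q s σ θ σ' θ') (hV : ∀ v ∈ V, v * v = 0)
    (hσ : σ ∈ V) (hθ : θ ∈ V) : s ^ 2 • σ = (p ^ 2 + q ^ 2) • σ := by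
  have hσθσ : σ * θ * σ = 0 := by
    rw [mul_eq_neg_mul_of_mul_self_eq_zero hV hσ hθ, neg_mul, mul_assoc, hV σ hσ, mul_zero,
      neg_zero]
  simpa [add_mul, hσθσ] using congrArg (· * σ) h.len

theorem sq_smul_right (h : SuperPtolemyFlip p q s σ θ σ' θ') (hθ : θ * θ = 0) :
    s ^ 2 • θ = (p ^ 2 + q ^ 2) • θ := by
  simpa [add_mul, mul_assoc, hθ] using congrArg (· * θ) h.len

theorem smul_left_eq (h : SuperPtolemyFlip p q s σ θ σ' θ') (hs : IsUnit s)
    (hV : ∀ v ∈ V, v * v = 0) (hσ : σ ∈ V) (hθ : θ ∈ V) : s • σ = p • σ' + q • θ' := by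
  rw [← hs.smul_left_cancel]
  linear_combination (norm := module)
    h.sq_smul_left hV hσ hθ - p • h.left - q • h.right

theorem smul_right_eq (h : SuperPtolemyFlip p q s σ θ σ' θ') (hs : IsUnit s)
    (hθ : θ * θ = 0) : s • θ = p • θ' - q • σ' := by
  rw [← hs.smul_left_cancel]
  linear_combination (norm := module) h.sq_smul_right hθ - p • h.right + q • h.left

theorem mul_eq (h : SuperPtolemyFlip p q s σ θ σ' θ') (hs : IsUnit s)
    (hV : ∀ v ∈ V, v * v = 0) (hσ : σ ∈ V) (hθ : θ ∈ V) : σ' * θ' = σ * θ := by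
  have hθσ := mul_eq_neg_mul_of_mul_self_eq_zero hV hθ hσ
  rw [← (hs.pow 2).smul_left_cancel]
  calc s ^ 2 • (σ' * θ') = (p • σ - q • θ) * (p • θ + q • σ) := by
        rw [← h.left, ← h.right, smul_mul_smul_comm, sq]
    _ = ((p ^ 2 + q ^ 2) • σ) * θ := by
        simp only [sub_mul, mul_add, smul_mul_assoc, mul_smul_comm, hV σ hσ, hV θ hθ, hθσ]
        module
    _ = s ^ 2 • (σ * θ) := by rw [← h.sq_smul_left hV hσ hθ, smul_mul_assoc]

end OneFlip

section Pentagon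

variable {V : Submodule R A} {a b c d e x₁ x₂ x₃ x₄ x₅ x₆ x₇ : R}
  {θ₁ θ₂ θ₃ θ₄ θ₅ θ₆ θ₇ θ₈ θ₉ θ₁₀ θ₁₁ θ₁₂ θ₁₃ : A}

theorem sq_smul_one_of_three_flips (hx₁ : IsUnit x₁) (hx₃ : IsUnit x₃)
    (hV : ∀ v ∈ V, v * v = 0) (hθ₁ : θ₁ ∈ V) (hθ₂ : θ₂ ∈ V)
    (f₁ : SuperPtolemyFlip (d * a) (e * x₂) (x₁ * x₃) θ₁ θ₂ θ₄ θ₅)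
    (f₂ : SuperPtolemyFlip (a * c) (b * x₃) (x₂ * x₄) θ₅ θ₃ θ₇ θ₆)
    (f₃ : SuperPtolemyFlip (c * e) (d * x₄) (x₃ * x₅) θ₄ θ₇ θ₈ θ₉) :
    (x₅ * x₂) ^ 2 • (1 : A) =
      ((b * d) ^ 2 + (c * x₁) ^ 2) • (1 : A) + (b * d * (c * x₁)) • (θ₂ * θ₃) := by
  have hx₁₃ := hx₁.mul hx₃
  have h₂₃ : (x₁ * x₃) • (θ₂ * θ₃) = (d * a) • (θ₅ * θ₃) - (e * x₂) • (θ₄ * θ₃) := by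
    rw [← smul_mul_assoc, f₁.smul_right_eq hx₁₃ (hV θ₂ hθ₂), sub_mul, smul_mul_assoc,
      smul_mul_assoc]
  have h₄₇ : (x₂ * x₄) • (θ₄ * θ₇) = (a * c) • (θ₁ * θ₂) - (b * x₃) • (θ₄ * θ₃) := by
    rw [← mul_smul_comm, f₂.left, mul_sub, mul_smul_comm, mul_smul_comm,
      f₁.mul_eq hx₁₃ hV hθ₁ hθ₂]
  rw [← (hx₃.pow 2).smul_left_cancel]
  linear_combination (norm := module) x₂ ^ 2 • f₃.len + d ^ 2 • f₂.len - c ^ 2 • f₁.len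
    + (c * d * e * x₂) • h₄₇ - (c * d * b * x₃) • h₂₃

theorem smul_left_of_three_flips (hx₁ : IsUnit x₁) (hx₃ : IsUnit x₃) (h₂₂ : θ₂ * θ₂ = 0)
    (f₁ : SuperPtolemyFlip (d * a) (e * x₂) (x₁ * x₃) θ₁ θ₂ θ₄ θ₅)
    (f₂ : SuperPtolemyFlip (a * c) (b * x₃) (x₂ * x₄) θ₅ θ₃ θ₇ θ₆)
    (f₃ : SuperPtolemyFlip (c * e) (d * x₄) (x₃ * x₅) θ₄ θ₇ θ₈ θ₉) :
    (x₅ * x₂) • θ₈ = (b * d) • θ₃ - (c * x₁) • θ₂ := by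
  rw [← hx₃.smul_left_cancel]
  linear_combination (norm := module)
    x₂ • f₃.left - d • f₂.left + c • f₁.smul_right_eq (hx₁.mul hx₃) h₂₂

theorem sq_smul_one_eq_of_four_flips (hx₂ : IsUnit x₂) (hx₃ : IsUnit x₃) (hx₄ : IsUnit x₄)
    (hx₅ : IsUnit x₅) (hV : ∀ v ∈ V, v * v = 0) (hθ₃ : θ₃ ∈ V) (hθ₄ : θ₄ ∈ V) (hθ₅ : θ₅ ∈ V)
    (f₂ : SuperPtolemyFlip (a * c) (b * x₃) (x₂ * x₄) θ₅ θ₃ θ₇ θ₆)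
    (f₃ : SuperPtolemyFlip (c * e) (d * x₄) (x₃ * x₅) θ₄ θ₇ θ₈ θ₉)
    (f₄ : SuperPtolemyFlip (e * b) (a * x₅) (x₄ * x₆) θ₉ θ₆ θ₁₁ θ₁₀)
    (f₅ : SuperPtolemyFlip (b * d) (c * x₆) (x₅ * x₇) θ₈ θ₁₁ θ₁₃ θ₁₂) :
    x₇ ^ 2 • (1 : A) = x₂ ^ 2 • (1 : A) := by
  have hx₂₄ := hx₂.mul hx₄
  have hlen : (x₇ * x₄) ^ 2 • (1 : A) = (x₂ * x₄) ^ 2 • (1 : A) := by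
    rw [sq_smul_one_of_three_flips hx₃ hx₅ hV hθ₄ (f₂.left_mem hx₂₄ hθ₅ hθ₃) f₃ f₄ f₅,
      f₂.mul_eq hx₂₄ hV hθ₅ hθ₃, f₂.len]
  rwa [mul_comm x₇, mul_comm x₂, mul_pow, mul_pow, mul_smul, mul_smul,
    (hx₄.pow 2).smul_left_cancel] at hlen

theorem smul_eq_of_four_flips (hx₂ : IsUnit x₂) (hx₃ : IsUnit x₃) (hx₄ : IsUnit x₄)
    (hx₅ : IsUnit x₅) (hV : ∀ v ∈ V, v * v = 0) (hθ₃ : θ₃ ∈ V) (hθ₅ : θ₅ ∈ V)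
    (f₂ : SuperPtolemyFlip (a * c) (b * x₃) (x₂ * x₄) θ₅ θ₃ θ₇ θ₆)
    (f₃ : SuperPtolemyFlip (c * e) (d * x₄) (x₃ * x₅) θ₄ θ₇ θ₈ θ₉)
    (f₄ : SuperPtolemyFlip (e * b) (a * x₅) (x₄ * x₆) θ₉ θ₆ θ₁₁ θ₁₀)
    (f₅ : SuperPtolemyFlip (b * d) (c * x₆) (x₅ * x₇) θ₈ θ₁₁ θ₁₃ θ₁₂) :
    x₇ • θ₁₃ = x₂ • θ₃ := by
  have hx₂₄ := hx₂.mul hx₄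
  have h₇₇ := hV θ₇ (f₂.left_mem hx₂₄ hθ₅ hθ₃)
  rw [← hx₄.smul_left_cancel, ← mul_smul, ← mul_smul, mul_comm x₄, mul_comm x₄,
    smul_left_of_three_flips hx₃ hx₅ h₇₇ f₃ f₄ f₅, f₂.smul_right_eq hx₂₄ (hV θ₃ hθ₃)]

theorem right_eq_neg_of_closing_flip (hc : IsUnit c) (hx₁ : IsUnit x₁) (hx₂ : IsUnit x₂)
    (hx₃ : IsUnit x₃) (hx₅ : IsUnit x₅) (hV : ∀ v ∈ V, v * v = 0)
    (hθ₂ : θ₂ ∈ V) (hθ₈ : θ₈ ∈ V) (hθ₁₁ : θ₁₁ ∈ V)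
    (f₁ : SuperPtolemyFlip (d * a) (e * x₂) (x₁ * x₃) θ₁ θ₂ θ₄ θ₅)
    (f₂ : SuperPtolemyFlip (a * c) (b * x₃) (x₂ * x₄) θ₅ θ₃ θ₇ θ₆)
    (f₃ : SuperPtolemyFlip (c * e) (d * x₄) (x₃ * x₅) θ₄ θ₇ θ₈ θ₉)
    (f₅ : SuperPtolemyFlip (b * d) (c * x₁) (x₅ * x₂) θ₈ θ₁₁ θ₃ θ₁₂) :
    θ₁₂ = -θ₂ := by
  have hundo := f₅.smul_left_eq (hx₅.mul hx₂) hV hθ₈ hθ₁₁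
  rw [smul_left_of_three_flips hx₁ hx₃ (hV θ₂ hθ₂) f₁ f₂ f₃, sub_eq_add_neg, add_right_inj,
    ← smul_neg, (hc.mul hx₁).smul_left_cancel] at hundo
  exact hundo.symm

end Pentagon

end SuperPtolemyFlip

/-- A multiplicative choice of square roots inside a set `Pos` of central units closed under
products, modelling the distinguished square roots of even elements with positive body. -/
structure IsCoherentSqrt {A : Type*} [Ring A] (Pos : Set A) (sqrt : A → A) : Prop where
  mul_mem : ∀ p ∈ Pos, ∀ q ∈ Pos, p * q ∈ Pos
  central : ∀ p ∈ Pos, ∀ x : A, p * x = x * p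
  isUnit : ∀ p ∈ Pos, IsUnit p
  sqrt_mul_self : ∀ p ∈ Pos, sqrt p * sqrt p = p
  sqrt_mem : ∀ p ∈ Pos, sqrt p ∈ Pos
  sqrt_mul : ∀ p ∈ Pos, ∀ q ∈ Pos, sqrt (p * q) = sqrt p * sqrt q

namespace IsCoherentSqrt

variable {A : Type*} [Ring A] {Pos : Set A} {sqrt : A → A} {p q : A}

/-- The chosen square root of an element of `Pos`, as a scalar in the center of `A`. -/
def root (h : IsCoherentSqrt Pos sqrt) (hp : p ∈ Pos) : Subring.center A :=
  ⟨sqrt p, Subring.mem_center_iff.2 fun x ↦ (h.central _ (h.sqrt_mem p hp) x).symm⟩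

theorem left_comm (h : IsCoherentSqrt Pos sqrt) (hp : p ∈ Pos) (x y : A) :
    p * (x * y) = x * (p * y) := by
  rw [← mul_assoc, h.central p hp, mul_assoc]

theorem isUnit_root (h : IsCoherentSqrt Pos sqrt) (hp : p ∈ Pos) : IsUnit (h.root hp) := by
  obtain ⟨u, hu⟩ := h.isUnit _ (h.sqrt_mem p hp)
  have hu_inv : (↑u⁻¹ : A) ∈ Subring.center A :=
    Set.units_inv_mem_center (hu ▸ (h.root hp).2)
  exact IsUnit.of_mul_eq_one ⟨_, hu_inv⟩ (Subtype.ext (by simp [root, ← hu]))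

theorem eq_of_root_eq (h : IsCoherentSqrt Pos sqrt) (hp : p ∈ Pos) (hq : q ∈ Pos)
    (hpq : h.root hp = h.root hq) : p = q := by
  have hsqrt : sqrt p = sqrt q := congrArg Subtype.val hpq
  rw [← h.sqrt_mul_self p hp, hsqrt, h.sqrt_mul_self q hq]

theorem injOn_sq_smul_one (h : IsCoherentSqrt Pos sqrt) :
    Set.InjOn (fun r : Subring.center A ↦ r ^ 2 • (1 : A)) (Subtype.val ⁻¹' Pos) := by
  intro r hr t ht hrt
  have hsq : (r : A) * r = t * t := by simpa [Subring.smul_def, sq] using hrt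
  refine Subtype.ext ?_
  rw [← h.sqrt_mul_self r hr, ← h.sqrt_mul r hr r hr, hsq, h.sqrt_mul t ht t ht,
    h.sqrt_mul_self t ht]

theorem superPtolemyFlip (h : IsCoherentSqrt Pos sqrt) {a b c d e f t σ θ σ' θ' : A}
    (ha : a ∈ Pos) (hc : c ∈ Pos) (hb : b ∈ Pos) (hd : d ∈ Pos) (he : e ∈ Pos) (hf : f ∈ Pos)
    (ht : t = a * c * (b * d)) (len : e * f = a * c + b * d + sqrt t * (σ * θ))
    (left : σ' * sqrt (e * f) = sqrt (a * c) * σ - sqrt (b * d) * θ)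
    (right : θ' * sqrt (e * f) = sqrt (a * c) * θ + sqrt (b * d) * σ) :
    SuperPtolemyFlip (h.root ha * h.root hc) (h.root hb * h.root hd) (h.root he * h.root hf)
      σ θ σ' θ' := by
  have hac := h.mul_mem a ha c hc
  have hbd := h.mul_mem b hb d hd
  have hef := h.mul_mem e he f hf
  have sqrt_ac := h.sqrt_mul a ha c hc
  have sqrt_bd := h.sqrt_mul b hb d hd
  have sqrt_ef := h.sqrt_mul e he f hf
  have sq_ac := h.sqrt_mul_self _ hac
  have sq_bd := h.sqrt_mul_self _ hbd
  have sq_ef := h.sqrt_mul_self _ hef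
  rw [← h.central _ (h.sqrt_mem _ hef)] at left right
  rw [ht, h.sqrt_mul _ hac _ hbd] at len
  rw [sqrt_ac] at len left right sq_ac
  rw [sqrt_bd] at len left right sq_bd
  rw [sqrt_ef] at left right sq_ef
  exact ⟨by simpa [root, Subring.smul_def, sq, sq_ac, sq_bd, sq_ef] using len, left, right⟩

end IsCoherentSqrt

open SuperPtolemyFlip in
/-- The scalars `a, …, e, x₁, …, x₇` are the square roots of the `λ`-lengths. Since a flip only
determines the square of the new one, roots are compared within a set `S` on which squaring is
injective, as it is for positive square roots. -/
theorem pentagon_relation_general {R A : Type*} [CommRing R] [Ring A] [Algebra R A]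
    {S : Set R} (hS : Set.InjOn (fun r : R ↦ r ^ 2 • (1 : A)) S)
    {a b c d e x₁ x₂ x₃ x₄ x₅ x₆ x₇ : R}
    (hc : IsUnit c) (hx₁ : IsUnit x₁) (hx₂ : IsUnit x₂) (hx₃ : IsUnit x₃) (hx₄ : IsUnit x₄)
    (hx₅ : IsUnit x₅) (hS₁ : x₁ ∈ S) (hS₂ : x₂ ∈ S) (hS₆ : x₆ ∈ S) (hS₇ : x₇ ∈ S)
    {θ₁ θ₂ θ₃ θ₄ θ₅ θ₆ θ₇ θ₈ θ₉ θ₁₀ θ₁₁ θ₁₂ θ₁₃ : A}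
    (h₁₁ : θ₁ * θ₁ = 0) (h₂₂ : θ₂ * θ₂ = 0) (h₃₃ : θ₃ * θ₃ = 0)
    (h₁₂ : θ₁ * θ₂ = -(θ₂ * θ₁)) (h₁₃ : θ₁ * θ₃ = -(θ₃ * θ₁)) (h₂₃ : θ₂ * θ₃ = -(θ₃ * θ₂))
    (f₁ : SuperPtolemyFlip (a * d) (e * x₂) (x₁ * x₃) θ₁ θ₂ θ₄ θ₅)
    (f₂ : SuperPtolemyFlip (a * c) (b * x₃) (x₂ * x₄) θ₅ θ₃ θ₇ θ₆)
    (f₃ : SuperPtolemyFlip (c * e) (d * x₄) (x₃ * x₅) θ₄ θ₇ θ₈ θ₉)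
    (f₄ : SuperPtolemyFlip (b * e) (a * x₅) (x₄ * x₆) θ₉ θ₆ θ₁₁ θ₁₀)
    (f₅ : SuperPtolemyFlip (b * d) (c * x₆) (x₅ * x₇) θ₈ θ₁₁ θ₁₃ θ₁₂) :
    x₆ = x₁ ∧ x₇ = x₂ ∧ θ₁₀ = θ₁ ∧ θ₁₂ = -θ₂ ∧ θ₁₃ = θ₃ := by
  rw [mul_comm a d] at f₁
  rw [mul_comm b e] at f₄
  let V := Submodule.span R {θ₁, θ₂, θ₃}
  have hV : ∀ v ∈ V, v * v = 0 :=
    mul_self_eq_zero_of_mem_span_triple h₁₁ h₂₂ h₃₃ h₁₂ h₁₃ h₂₃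
  have hθ₁ : θ₁ ∈ V := Submodule.subset_span (by simp)
  have hθ₂ : θ₂ ∈ V := Submodule.subset_span (by simp)
  have hθ₃ : θ₃ ∈ V := Submodule.subset_span (by simp)
  have hθ₄ : θ₄ ∈ V := f₁.left_mem (hx₁.mul hx₃) hθ₁ hθ₂
  have hθ₅ : θ₅ ∈ V := f₁.right_mem (hx₁.mul hx₃) hθ₁ hθ₂
  have hθ₆ : θ₆ ∈ V := f₂.right_mem (hx₂.mul hx₄) hθ₅ hθ₃
  have hθ₇ : θ₇ ∈ V := f₂.left_mem (hx₂.mul hx₄) hθ₅ hθ₃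
  have hθ₈ : θ₈ ∈ V := f₃.left_mem (hx₃.mul hx₅) hθ₄ hθ₇
  have hθ₉ : θ₉ ∈ V := f₃.right_mem (hx₃.mul hx₅) hθ₄ hθ₇
  have g₁ := f₁.quarterTurn hV hθ₁ hθ₂
  have g₂ := f₂.quarterTurn_symm hV hθ₅ hθ₃
  have g₃ := f₃.quarterTurn hV hθ₄ hθ₇
  have g₄ := f₄.quarterTurn_symm hV hθ₉ hθ₆
  have hθ₁_neg := V.neg_mem hθ₁
  have hθ₃_neg := V.neg_mem hθ₃
  obtain rfl : x₆ = x₁ :=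
    hS hS₆ hS₁ (sq_smul_one_eq_of_four_flips hx₁ hx₂ hx₃ hx₄ hV hθ₁_neg hθ₃_neg hθ₂ g₁ g₂ g₃ g₄)
  obtain rfl : x₇ = x₂ :=
    hS hS₇ hS₂ (sq_smul_one_eq_of_four_flips hx₂ hx₃ hx₄ hx₅ hV hθ₃ hθ₄ hθ₅ f₂ f₃ f₄ f₅)
  obtain rfl : θ₁₀ = θ₁ := neg_injective <| hx₁.smul_left_cancel.1 <|
    smul_eq_of_four_flips hx₁ hx₂ hx₃ hx₄ hV hθ₁_neg hθ₂ g₁ g₂ g₃ g₄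
  obtain rfl : θ₁₃ = θ₃ := hx₂.smul_left_cancel.1 <|
    smul_eq_of_four_flips hx₂ hx₃ hx₄ hx₅ hV hθ₃ hθ₅ f₂ f₃ f₄ f₅
  have hθ₁₁ : θ₁₁ ∈ V := f₄.left_mem (hx₄.mul hx₁) hθ₉ hθ₆
  exact ⟨rfl, rfl, rfl,
    right_eq_neg_of_closing_flip hc hx₁ hx₂ hx₃ hx₅ hV hθ₂ hθ₈ hθ₁₁ f₁ f₂ f₃ f₅, rfl⟩

/-- the pentagon relation; appendix of the paper.  Consider a
pentagon with sides `a, b, c, d, e` and diagonals `x₁, x₂`, with odd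
`μ`-invariants `θ₁, θ₂, θ₃`.  We work in a `ℚ`-algebra `A` together with a
"positive cone" `Pos ⊆ A` of central invertible even elements closed under
addition, multiplication and `Ring.inverse`, and a coherent choice of square
roots `sqrt` on `Pos`: `sqrt p` is central, lies in `Pos`, squares to `p`, and is
multiplicative.  (This encodes the distinguished square roots with positive body,
multiplicative on all products that occur and extended to even-plus-odd elements
by `√(A₀+βΣ) = √A₀ + (β/(2√A₀))Σ`.)  The five successive super Ptolemy flips of
the diagonals `x₁, x₂, x₃, x₄, x₅` are imposed as the hypotheses `flip₁`–`flip₅`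
(each giving the new `λ`-length and the two new `μ`-invariants).  Then the
pentagon closes up: `x₆ = x₁`, `x₇ = x₂`, `θ₁₀ = θ₁`, `θ₁₂ = −θ₂`, `θ₁₃ = θ₃`. -/
theorem pentagon_relation
    (A : Type*) [Ring A] [Algebra ℚ A]
    (Pos : Set A) (sqrt : A → A)
    (hPosAdd : ∀ p ∈ Pos, ∀ q ∈ Pos, p + q ∈ Pos)
    (hPosMul : ∀ p ∈ Pos, ∀ q ∈ Pos, p * q ∈ Pos)
    (hPosInv : ∀ p ∈ Pos, Ring.inverse p ∈ Pos)
    (hPosCentral : ∀ p ∈ Pos, ∀ x : A, p * x = x * p)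
    (hPosUnit : ∀ p ∈ Pos, IsUnit p)
    (hsqrtSq : ∀ p ∈ Pos, sqrt p * sqrt p = p)
    (hsqrtMem : ∀ p ∈ Pos, sqrt p ∈ Pos)
    (hsqrtMul : ∀ p ∈ Pos, ∀ q ∈ Pos, sqrt (p * q) = sqrt p * sqrt q)
    -- the λ-lengths: sides, diagonals, and the flipped diagonals
    (a b c d e x1 x2 x3 x4 x5 x6 x7 : A)
    (haP : a ∈ Pos) (hbP : b ∈ Pos) (hcP : c ∈ Pos) (hdP : d ∈ Pos) (heP : e ∈ Pos)
    (hx1 : x1 ∈ Pos) (hx2 : x2 ∈ Pos) (hx3 : x3 ∈ Pos) (hx4 : x4 ∈ Pos)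
    (hx5 : x5 ∈ Pos) (hx6 : x6 ∈ Pos) (hx7 : x7 ∈ Pos)
    -- the odd μ-invariants of the initial triangulation
    (θ1 θ2 θ3 : A)
    (h11 : θ1 * θ1 = 0) (h22 : θ2 * θ2 = 0) (h33 : θ3 * θ3 = 0)
    (h12 : θ1 * θ2 = -(θ2 * θ1)) (h13 : θ1 * θ3 = -(θ3 * θ1))
    (h23 : θ2 * θ3 = -(θ3 * θ2))
    (θ4 θ5 θ6 θ7 θ8 θ9 θ10 θ11 θ12 θ13 : A)
    -- first flip (of x₁)
    (flip1a : x1 * x3 = a * d + e * x2 + sqrt (a * d * e * x2) * (θ1 * θ2))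
    (flip1b : θ4 * sqrt (x1 * x3) = sqrt (a * d) * θ1 - sqrt (e * x2) * θ2)
    (flip1c : θ5 * sqrt (x1 * x3) = sqrt (a * d) * θ2 + sqrt (e * x2) * θ1)
    -- second flip (of x₂)
    (flip2a : x2 * x4 = a * c + b * x3 + sqrt (a * c * b * x3) * (θ5 * θ3))
    (flip2b : θ6 * sqrt (x2 * x4) = sqrt (a * c) * θ3 + sqrt (b * x3) * θ5)
    (flip2c : θ7 * sqrt (x2 * x4) = sqrt (a * c) * θ5 - sqrt (b * x3) * θ3)
    -- third flip (of x₃)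
    (flip3a : x3 * x5 = c * e + d * x4 + sqrt (c * d * e * x4) * (θ4 * θ7))
    (flip3b : θ8 * sqrt (x3 * x5) = sqrt (c * e) * θ4 - sqrt (d * x4) * θ7)
    (flip3c : θ9 * sqrt (x3 * x5) = sqrt (c * e) * θ7 + sqrt (d * x4) * θ4)
    -- fourth flip (of x₄)
    (flip4a : x4 * x6 = b * e + a * x5 + sqrt (a * b * e * x5) * (θ9 * θ6))
    (flip4b : θ10 * sqrt (x4 * x6) = sqrt (b * e) * θ6 + sqrt (a * x5) * θ9)
    (flip4c : θ11 * sqrt (x4 * x6) = sqrt (b * e) * θ9 - sqrt (a * x5) * θ6)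
    -- fifth flip (of x₅)
    (flip5a : x5 * x7 = b * d + c * x6 + sqrt (b * c * d * x6) * (θ8 * θ11))
    (flip5b : θ12 * sqrt (x5 * x7) = sqrt (b * d) * θ11 + sqrt (c * x6) * θ8)
    (flip5c : θ13 * sqrt (x5 * x7) = sqrt (b * d) * θ8 - sqrt (c * x6) * θ11) :
    x6 = x1 ∧ x7 = x2 ∧ θ10 = θ1 ∧ θ12 = -θ2 ∧ θ13 = θ3 := by
  have h : IsCoherentSqrt Pos sqrt :=
    ⟨hPosMul, hPosCentral, hPosUnit, hsqrtSq, hsqrtMem, hsqrtMul⟩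
  obtain ⟨h61, h72, hθ⟩ := pentagon_relation_general h.injOn_sq_smul_one (h.isUnit_root hcP)
    (h.isUnit_root hx1) (h.isUnit_root hx2) (h.isUnit_root hx3) (h.isUnit_root hx4)
    (h.isUnit_root hx5) (hsqrtMem x1 hx1) (hsqrtMem x2 hx2) (hsqrtMem x6 hx6) (hsqrtMem x7 hx7)
    h11 h22 h33 h12 h13 h23
    (h.superPtolemyFlip haP hdP heP hx2 hx1 hx3 (mul_assoc _ _ _) flip1a flip1b flip1c)
    (h.superPtolemyFlip haP hcP hbP hx3 hx2 hx4 (mul_assoc _ _ _) flip2a flip2c flip2b)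
    (h.superPtolemyFlip hcP heP hdP hx4 hx3 hx5
      (by simp only [mul_assoc, h.left_comm hdP]) flip3a flip3b flip3c)
    (h.superPtolemyFlip hbP heP haP hx5 hx4 hx6
      (by simp only [mul_assoc, h.left_comm haP]) flip4a flip4c flip4b)
    (h.superPtolemyFlip hbP hdP hcP hx6 hx5 hx7
      (by simp only [mul_assoc, h.left_comm hcP]) flip5a flip5c flip5b)
  exact ⟨h.eq_of_root_eq hx6 hx1 h61, h.eq_of_root_eq hx7 hx2 h72, hθ⟩
end
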